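/- arXiv:2402.03249 — 4 statements merged into one kernel-verified Lean document; each statement's English description precedes it below -/
import Mathlib

section
/- Let β ∈ (0,1) and for each n let X ~ P_{β,Q^{CW}} be a Curie–Weiss Ising vector on {−1,1}^n. Then √n · X̄_n converges in distribution to N(0, 1/(1−β)). -/
open MeasureTheory ProbabilityTheory Filter Topology Matrix

noncomputable section

/-- The `±1` configuration associated to a boolean configuration. -/
def pmVec {ι : Type*} (s : ι → Bool) : ι → ℝ := fun i => if s i then 1 else -1

/-- Unnormalized Ising weight `exp((β/2) zᵀ Q z)`. -/
def isingWeight {ι : Type*} [Fintype ι] (β : ℝ) (Q : Matrix ι ι ℝ) (z : ι → ℝ) : ℝ :=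
  Real.exp (β / 2 * (z ⬝ᵥ Q.mulVec z))

/-- Ising partition function `Z(β,Q)`. -/
def isingZ (ι : Type*) [Fintype ι] [DecidableEq ι] (β : ℝ) (Q : Matrix ι ι ℝ) : ℝ :=
  ∑ s : ι → Bool, isingWeight β Q (pmVec s)

/-- The Ising probability measure `P_{β,Q}` on `{±1}^ι ⊆ ℝ^ι`:
`P(z) = exp((β/2) zᵀQz) / Z(β,Q)`. -/
def isingMeasure (ι : Type*) [Fintype ι] [DecidableEq ι] (β : ℝ) (Q : Matrix ι ι ℝ) :
    Measure (ι → ℝ) :=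
  ∑ s : ι → Bool,
    ENNReal.ofReal (isingWeight β Q (pmVec s) / isingZ ι β Q) • Measure.dirac (pmVec s)

/-- Sample mean `X̄ = (1/n) Σ_i X_i`. -/
def sampleMean {ι : Type*} [Fintype ι] (x : ι → ℝ) : ℝ := (∑ i, x i) / (Fintype.card ι : ℝ)

/-- Sample covariance `T_n = (1/n) Σ_i (X_i - X̄)(Y_i - Ȳ)`. -/
def sampleCov {ι : Type*} [Fintype ι] (x y : ι → ℝ) : ℝ :=
  (∑ i, (x i - sampleMean x) * (y i - sampleMean y)) / (Fintype.card ι : ℝ)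

/-- Convergence in distribution: weak convergence of the laws, tested against
bounded continuous functions. -/
def TendstoInDistribution (μ : ℕ → Measure ℝ) (ν : Measure ℝ) : Prop :=
  ∀ f : BoundedContinuousFunction ℝ ℝ,
    Tendsto (fun n => ∫ x, f x ∂(μ n)) atTop (𝓝 (∫ x, f x ∂ν))

/-- The Curie–Weiss interaction matrix `Q^{CW} = (1/n)(11ᵀ - I)`. -/
def QCW (n : ℕ) : Matrix (Fin n) (Fin n) ℝ := fun i j => if i = j then 0 else (n : ℝ)⁻¹

/-- `m(β)`: equal to `0` for `β ≤ 1`, and to the unique positive root of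
`m = tanh(β m)` for `β > 1`. -/
def isingMag (β : ℝ) : ℝ := sSup {m : ℝ | 0 ≤ m ∧ m = Real.tanh (β * m)}



/-- The normalised sum `S/√n`. -/
def cwW {n : ℕ} (s : Fin n → Bool) : ℝ := (∑ i, pmVec s i) / √(n : ℝ)

theorem cw_weight {n : ℕ} (hn : 0 < n) (β : ℝ) (s : Fin n → Bool) :
    isingWeight β (QCW n) (pmVec s) = Real.exp (-(β / 2)) * Real.exp (β / 2 * cwW s ^ 2) := by
  have hn' : (n : ℝ) ≠ 0 := by positivity
  have hsq : ∀ i, pmVec s i * pmVec s i = 1 := by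
    intro i; unfold pmVec; split_ifs <;> norm_num
  have h1 : ∀ i, (QCW n).mulVec (pmVec s) i
      = (n : ℝ)⁻¹ * (∑ j, pmVec s j) - (n : ℝ)⁻¹ * pmVec s i := by
    intro i
    have h2 : ∀ j, QCW n i j * pmVec s j
        = (n : ℝ)⁻¹ * pmVec s j - if i = j then (n : ℝ)⁻¹ * pmVec s j else 0 := by
      intro j; unfold QCW; split_ifs <;> ring
    simp only [Matrix.mulVec, dotProduct, h2, Finset.sum_sub_distrib, Finset.mul_sum]
    simp
  have h3 : pmVec s ⬝ᵥ (QCW n).mulVec (pmVec s) = (n : ℝ)⁻¹ * (∑ j, pmVec s j) ^ 2 - 1 := by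
    simp only [dotProduct, h1]
    have : ∀ i, pmVec s i * ((n : ℝ)⁻¹ * (∑ j, pmVec s j) - (n : ℝ)⁻¹ * pmVec s i)
        = pmVec s i * ((n : ℝ)⁻¹ * (∑ j, pmVec s j)) - (n : ℝ)⁻¹ := by
      intro i
      linear_combination (-(n : ℝ)⁻¹) * hsq i
    simp only [this, Finset.sum_sub_distrib, ← Finset.sum_mul]
    simp [hn']
    ring
  rw [isingWeight, h3, ← Real.exp_add, cwW, div_pow, Real.sq_sqrt (by positivity)]
  congr 1
  field_simp
  ring

theorem cw_weight_pos {ι : Type*} [Fintype ι] (β : ℝ) (Q : Matrix ι ι ℝ) (z : ι → ℝ) :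
    0 < isingWeight β Q z := Real.exp_pos _

theorem cw_Z_pos (ι : Type*) [Fintype ι] [DecidableEq ι] (β : ℝ) (Q : Matrix ι ι ℝ) :
    0 < isingZ ι β Q :=
  Finset.sum_pos (fun _ _ => cw_weight_pos _ _ _) Finset.univ_nonempty

theorem cw_integral (ι : Type*) [Fintype ι] [DecidableEq ι] (β : ℝ) (Q : Matrix ι ι ℝ)
    (g : (ι → ℝ) → ℂ) :
    ∫ x, g x ∂(isingMeasure ι β Q)
      = ∑ s : ι → Bool, ((isingWeight β Q (pmVec s) / isingZ ι β Q : ℝ) : ℂ) * g (pmVec s) := by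
  unfold isingMeasure
  rw [integral_finsetSum_measure]
  · refine Finset.sum_congr rfl fun s _ => ?_
    rw [integral_smul_measure, integral_dirac, ENNReal.toReal_ofReal]
    · simp
    · exact (div_pos (cw_weight_pos _ _ _) (cw_Z_pos _ _ _)).le
  · intro s _
    exact (integrable_dirac (by simp)).smul_measure ENNReal.ofReal_ne_top

instance cw_prob (ι : Type*) [Fintype ι] [DecidableEq ι] (β : ℝ) (Q : Matrix ι ι ℝ) :
    IsProbabilityMeasure (isingMeasure ι β Q) := by
  constructor
  unfold isingMeasure
  simp only [Measure.coe_finsetSum, Finset.sum_apply, Measure.smul_apply, measure_univ,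
    smul_eq_mul, mul_one]
  rw [← ENNReal.ofReal_sum_of_nonneg, ← Finset.sum_div]
  · change ENNReal.ofReal (isingZ ι β Q / isingZ ι β Q) = 1
    rw [div_self (cw_Z_pos _ _ _).ne', ENNReal.ofReal_one]
  · intro s _
    exact (div_pos (cw_weight_pos _ _ _) (cw_Z_pos _ _ _)).le

/-- Unnormalised characteristic function. -/
def cwN (β : ℝ) (n : ℕ) (t : ℝ) : ℂ :=
  ∑ s : Fin n → Bool, Complex.exp (β / 2 * (cwW s : ℂ) ^ 2) * Complex.exp (t * cwW s * Complex.I)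

/-- Its Hubbard-Stratonovich representation. -/
def cwF (β : ℝ) (n : ℕ) (t : ℝ) : ℂ :=
  ∫ x : ℝ, Complex.exp (-(x : ℂ) ^ 2 / 2) *
    Complex.cosh ((√β * x + t * Complex.I) / (√(n : ℝ) : ℝ)) ^ n

theorem cw_charFun {n : ℕ} (hn : 0 < n) (β t : ℝ) :
    charFun (Measure.map (fun x : Fin n → ℝ => Real.sqrt n * sampleMean x)
        (isingMeasure (Fin n) β (QCW n))) t = cwN β n t / cwN β n 0 := by
  have hm : Measurable (fun x : Fin n → ℝ => Real.sqrt n * sampleMean x) := by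
    unfold sampleMean; fun_prop
  rw [charFun_apply_real, integral_map hm.aemeasurable (by fun_prop), cw_integral]
  have hW : ∀ s : Fin n → Bool, √(n : ℝ) * sampleMean (pmVec s) = cwW s := by
    intro s
    have h0 : √(n : ℝ) ≠ 0 := by positivity
    have h2 : √(n : ℝ) ^ 2 = n := Real.sq_sqrt (by positivity)
    simp only [sampleMean, cwW, Fintype.card_fin]
    rw [← h2, Real.sqrt_sq (by positivity)]
    field_simp
  have hZ : ((isingZ (Fin n) β (QCW n) : ℝ) : ℂ) = Complex.exp (-(β / 2)) * cwN β n 0 := by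
    simp only [isingZ, cw_weight hn, cwN, Finset.mul_sum]
    push_cast
    simp
  have hZ0 : ((isingZ (Fin n) β (QCW n) : ℝ) : ℂ) ≠ 0 := by
    exact_mod_cast (cw_Z_pos _ _ _).ne'
  have hN0 : cwN β n 0 ≠ 0 := by
    intro h; rw [h, mul_zero] at hZ; exact hZ0 hZ
  simp only [hW, cw_weight hn]
  push_cast
  rw [hZ]
  have he := Complex.exp_ne_zero (-((β : ℂ) / 2))
  have hN : cwN β n t = ∑ s : Fin n → Bool, Complex.exp (β / 2 * (cwW s : ℂ) ^ 2) *
      Complex.exp (t * cwW s * Complex.I) := rfl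
  rw [hN, Finset.sum_div]
  refine Finset.sum_congr rfl fun s _ => ?_
  field_simp

theorem cw_sum_exp {n : ℕ} (u : ℂ) :
    ∑ s : Fin n → Bool, Complex.exp (u * cwW s)
      = 2 ^ n * Complex.cosh (u / (√(n : ℝ) : ℝ)) ^ n := by
  have h := Fintype.prod_sum (fun (_ : Fin n) (b : Bool) =>
    Complex.exp (u / (√(n : ℝ) : ℝ) * (if b then 1 else -1)))
  simp only [Fintype.sum_bool, Finset.prod_const, Finset.card_univ, Fintype.card_fin] at h
  have h2 : 2 * Complex.cosh (u / (√(n : ℝ) : ℝ)) =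
      Complex.exp (u / (√(n : ℝ) : ℝ) * (if True then 1 else -1)) +
      Complex.exp (u / (√(n : ℝ) : ℝ) * (if false then 1 else -1)) := by
    simp [Complex.cosh]
    ring
  rw [← mul_pow, h2, h]
  refine Finset.sum_congr rfl fun s _ => ?_
  rw [← Complex.exp_sum, ← Finset.mul_sum]
  congr 1
  have h4 : ∀ i, ((if s i = true then 1 else -1 : ℂ)) = ((pmVec s i : ℝ) : ℂ) := by
    intro i; unfold pmVec; split_ifs <;> simp
  simp only [h4, cwW]
  push_cast
  ring

theorem cw_HS {β : ℝ} (hβ : 0 < β) (n : ℕ) (t : ℝ) :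
    ((Real.pi : ℂ) / (1 / 2)) ^ (1 / 2 : ℂ) * cwN β n t = 2 ^ n * cwF β n t := by
  have hb : (-(1 / 2 : ℂ)).re < 0 := by norm_num
  have hs : ((√β : ℝ) : ℂ) ^ 2 = β := by
    rw [← Complex.ofReal_pow, Real.sq_sqrt hβ.le]
  unfold cwF
  rw [← integral_const_mul]
  have h1 : ∀ x : ℝ, 2 ^ n * (Complex.exp (-(x : ℂ) ^ 2 / 2) *
    Complex.cosh ((√β * x + t * Complex.I) / (√(n : ℝ) : ℝ)) ^ n)
    = ∑ s : Fin n → Bool, Complex.exp (-(1 / 2 : ℂ) * (x : ℂ) ^ 2 + (√β * cwW s) * x +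
        t * cwW s * Complex.I) := by
    intro x
    rw [mul_left_comm, ← cw_sum_exp, Finset.mul_sum]
    refine Finset.sum_congr rfl fun s _ => ?_
    rw [← Complex.exp_add]
    congr 1
    ring
  simp only [h1]
  rw [integral_finsetSum]
  · unfold cwN
    rw [Finset.mul_sum]
    refine Finset.sum_congr rfl fun s _ => ?_
    rw [integral_cexp_quadratic hb, neg_neg, ← Complex.exp_add]
    congr 2
    rw [mul_pow, hs]
    ring
  · intro s _
    exact integrable_cexp_quadratic' hb _ _

theorem cw_pointwise (u : ℂ) :
    Tendsto (fun n : ℕ => Complex.cosh (u / (√(n : ℝ) : ℝ)) ^ n) atTop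
      (𝓝 (Complex.exp (u ^ 2 / 2))) := by
  have hc : ∀ z : ℂ, Complex.cosh z = 1 + 2 * Complex.sinh (z / 2) ^ 2 := by
    intro z
    have h := Complex.cosh_two_mul (z / 2)
    rw [mul_div_cancel₀ z two_ne_zero, Complex.cosh_sq] at h
    rw [h]; ring
  simp only [hc]
  apply Complex.tendsto_one_add_pow_exp_of_tendsto
  have hsq : Tendsto (fun n : ℕ => (√(n : ℝ))) atTop atTop :=
    Real.tendsto_sqrt_atTop.comp tendsto_natCast_atTop_atTop
  have hd : HasDerivAt (fun r : ℂ => Complex.sinh (u / 2 * r)) (u / 2) 0 := by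
    have := ((hasDerivAt_id (0 : ℂ)).const_mul (u / 2)).csinh
    simpa using this
  have hd2 := hd.tendsto_slope_zero
  have hr : Tendsto (fun n : ℕ => (((√(n : ℝ))⁻¹ : ℝ) : ℂ)) atTop (𝓝[≠] 0) := by
    rw [tendsto_nhdsWithin_iff]
    constructor
    · have h1 := hsq.inv_tendsto_atTop
      have := (Complex.continuous_ofReal.tendsto 0).comp h1
      simpa [Function.comp_def] using this
    · filter_upwards [eventually_gt_atTop 0] with n hn
      have : √(n : ℝ) ≠ 0 := by positivity
      simpa using (Nat.pos_iff_ne_zero.mp hn)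
  have h3 := ((hd2.comp hr).pow 2).const_mul 2
  have e : (2 : ℂ) * (u / 2) ^ 2 = u ^ 2 / 2 := by ring
  rw [e] at h3
  refine h3.congr fun n => ?_
  have h2 : ((√(n : ℝ) : ℝ) : ℂ) ^ 2 = n := by
    rw [← Complex.ofReal_pow, Real.sq_sqrt (by positivity)]; simp
  simp only [Function.comp, smul_eq_mul, zero_add, mul_zero, Complex.sinh_zero, sub_zero,
    Complex.ofReal_inv, inv_inv, mul_pow, h2]
  rw [show u / 2 * ((√(n : ℝ) : ℝ) : ℂ)⁻¹ = u / ((√(n : ℝ) : ℝ) : ℂ) / 2 by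
    rw [div_eq_mul_inv u ((√(n : ℝ) : ℝ) : ℂ)]; ring]
  ring

theorem cw_norm_cosh (z : ℂ) : ‖Complex.cosh z‖ ≤ Real.cosh z.re := by
  rw [Complex.cosh, Real.cosh_eq, norm_div]
  have := norm_add_le (Complex.exp z) (Complex.exp (-z))
  rw [Complex.norm_exp, Complex.norm_exp, Complex.neg_re] at this
  simp only [Complex.norm_ofNat]
  linarith

theorem cw_F_tendsto {β : ℝ} (hβ : 0 < β) (hβ₁ : β < 1) (t : ℝ) :
    Tendsto (fun n => cwF β n t) atTop
      (𝓝 (∫ x : ℝ, Complex.exp (-(x : ℂ) ^ 2 / 2) *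
        Complex.exp ((√β * x + t * Complex.I) ^ 2 / 2))) := by
  unfold cwF
  refine tendsto_integral_of_dominated_convergence
    (fun x : ℝ => Real.exp (-((1 - β) / 2) * x ^ 2)) ?_ ?_ ?_ ?_
  · intro n
    refine Continuous.aestronglyMeasurable ?_
    have := Complex.continuous_cosh
    fun_prop
  · exact integrable_exp_neg_mul_sq (by linarith)
  · intro n
    refine Eventually.of_forall fun x => ?_
    have h1 : ‖Complex.exp (-(x : ℂ) ^ 2 / 2)‖ = Real.exp (-x ^ 2 / 2) := by
      rw [Complex.norm_exp]
      congr 1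
      rw [show (-(x : ℂ) ^ 2 / 2) = ((-x ^ 2 / 2 : ℝ) : ℂ) by push_cast; ring, Complex.ofReal_re]
    have hre : ((√β * x + t * Complex.I) / ((√(n : ℝ) : ℝ) : ℂ)).re = √β * x / √(n : ℝ) := by
      rw [Complex.div_ofReal_re]; simp
    have h2 := (cw_norm_cosh ((√β * x + t * Complex.I) / ((√(n : ℝ) : ℝ) : ℂ))).trans
      (Real.cosh_le_exp_half_sq _)
    rw [hre] at h2
    rw [norm_mul, norm_pow, h1]
    calc _ ≤ Real.exp (-x ^ 2 / 2) * Real.exp ((√β * x / √(n : ℝ)) ^ 2 / 2) ^ n := by gcongr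
      _ ≤ _ := by
        rw [← Real.exp_nat_mul, ← Real.exp_add, div_pow, mul_pow, Real.sq_sqrt hβ.le,
          Real.sq_sqrt (by positivity)]
        apply Real.exp_le_exp.mpr
        rcases Nat.eq_zero_or_pos n with h | h
        · subst h
          simp
          nlinarith [mul_nonneg hβ.le (sq_nonneg x)]
        · have : (n : ℝ) ≠ 0 := by positivity
          field_simp
          nlinarith
  · refine Eventually.of_forall fun x => ?_
    exact (cw_pointwise _).const_mul _

theorem cw_limit {β : ℝ} (hβ : 0 < β) (hβ₁ : β < 1) (t : ℝ) :
    (∫ x : ℝ, Complex.exp (-(x : ℂ) ^ 2 / 2) *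
        Complex.exp ((√β * x + t * Complex.I) ^ 2 / 2))
      = ((Real.pi : ℂ) / ((1 - β) / 2)) ^ (1 / 2 : ℂ)
        * Complex.exp (-(1 / (1 - β)) * t ^ 2 / 2) := by
  have hs : ((√β : ℝ) : ℂ) ^ 2 = β := by
    rw [← Complex.ofReal_pow, Real.sq_sqrt hβ.le]
  have hb : (-((1 - β) / 2 : ℂ)).re < 0 := by
    rw [show (-((1 - β) / 2 : ℂ)) = ((-((1 - β) / 2) : ℝ) : ℂ) by push_cast; ring,
      Complex.ofReal_re]
    linarith
  have h1 : ∀ x : ℝ, Complex.exp (-(x : ℂ) ^ 2 / 2) *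
        Complex.exp ((√β * x + t * Complex.I) ^ 2 / 2)
      = Complex.exp (-((1 - β) / 2 : ℂ) * (x : ℂ) ^ 2 + (√β * t * Complex.I) * x
        + (-t ^ 2 / 2)) := by
    intro x
    rw [← Complex.exp_add]
    congr 1
    linear_combination (x : ℂ) ^ 2 / 2 * hs + (t : ℂ) ^ 2 / 2 * Complex.I_sq
  simp only [h1]
  rw [integral_cexp_quadratic hb, neg_neg]
  congr 2
  have h0 : (1 - β : ℂ) ≠ 0 := by
    have : (1 - β : ℝ) ≠ 0 := by linarith
    exact_mod_cast this
  rw [mul_pow, mul_pow, hs, Complex.I_sq]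
  field_simp
  ring

/-- **(Curie–Weiss CLT, subcritical `β < 1`).** If `X ~ P_{β,Q^{CW}}` with `β ∈ (0,1)`, then
`√n X̄ₙ →d N(0, 1/(1-β))`. -/
theorem curieWeiss_clt_subcritical (β : ℝ) (hβ₀ : 0 < β) (hβ₁ : β < 1) :
    TendstoInDistribution
      (fun n => Measure.map (fun x : Fin n → ℝ => Real.sqrt n * sampleMean x)
        (isingMeasure (Fin n) β (QCW n)))
      (gaussianReal 0 (Real.toNNReal (1 / (1 - β)))) := by
  have hm : ∀ n : ℕ, Measurable (fun x : Fin n → ℝ => Real.sqrt n * sampleMean x) := by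
    intro n; unfold sampleMean; fun_prop
  have hp : ∀ n : ℕ, IsProbabilityMeasure
      (Measure.map (fun x : Fin n → ℝ => Real.sqrt n * sampleMean x)
        (isingMeasure (Fin n) β (QCW n))) :=
    fun n => Measure.isProbabilityMeasure_map (hm n).aemeasurable
  let μ : ℕ → ProbabilityMeasure ℝ := fun n => ⟨_, hp n⟩
  let ν : ProbabilityMeasure ℝ :=
    ⟨gaussianReal 0 (Real.toNNReal (1 / (1 - β))), inferInstance⟩
  have key : Tendsto μ atTop (𝓝 ν) := by
    rw [ProbabilityMeasure.tendsto_iff_tendsto_charFun]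
    intro t
    change Tendsto (fun n : ℕ => charFun
      (Measure.map (fun x : Fin n → ℝ => Real.sqrt n * sampleMean x)
        (isingMeasure (Fin n) β (QCW n))) t) atTop
        (𝓝 (charFun (gaussianReal 0 (Real.toNNReal (1 / (1 - β)))) t))
    have h1β : (0 : ℝ) < 1 / (1 - β) := by
      apply one_div_pos.mpr; linarith
    have hA : ((Real.pi : ℂ) / ((1 - β) / 2)) ^ (1 / 2 : ℂ) ≠ 0 := by
      have h2 : (Real.pi / ((1 - β) / 2) : ℝ) ≠ 0 := by
        have := Real.pi_pos
        have : 0 < 1 - β := by linarith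
        positivity
      have h3 : ((Real.pi : ℂ) / ((1 - β) / 2)) ≠ 0 := by exact_mod_cast h2
      simp only [ne_eq, Complex.cpow_eq_zero_iff, h3, false_and, not_false_eq_true]
    have hB : ((Real.pi : ℂ) / (1 / 2)) ^ (1 / 2 : ℂ) ≠ 0 := by
      have h3 : ((Real.pi : ℂ) / (1 / 2)) ≠ 0 := by simp [Real.pi_ne_zero]
      simp only [ne_eq, Complex.cpow_eq_zero_iff, h3, false_and, not_false_eq_true]
    have hF := cw_F_tendsto hβ₀ hβ₁ t
    have hF0 := cw_F_tendsto hβ₀ hβ₁ 0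
    rw [cw_limit hβ₀ hβ₁] at hF hF0
    have hlim := hF.div hF0 (by simpa using hA)
    have hval : charFun (gaussianReal 0 (Real.toNNReal (1 / (1 - β)))) t
        = ((Real.pi : ℂ) / ((1 - β) / 2)) ^ (1 / 2 : ℂ)
        * Complex.exp (-(1 / (1 - β)) * t ^ 2 / 2) /
        (((Real.pi : ℂ) / ((1 - β) / 2)) ^ (1 / 2 : ℂ)
        * Complex.exp (-(1 / (1 - β)) * (0 : ℝ) ^ 2 / 2)) := by
      rw [mul_div_mul_left _ _ hA, charFun_gaussianReal, Real.coe_toNNReal _ h1β.le]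
      simp
      congr 1
      ring
    rw [hval]
    refine hlim.congr' ?_
    filter_upwards [eventually_gt_atTop 0] with n hn
    rw [cw_charFun hn, ← mul_div_mul_left _ _ hB, cw_HS hβ₀, cw_HS hβ₀,
      mul_div_mul_left _ _ (pow_ne_zero n two_ne_zero)]
    rfl
  intro f
  exact (ProbabilityMeasure.tendsto_iff_forall_integral_tendsto.mp key) f

end
end

section
/- For every σ² ≥ 1 there exists a sequence of n×n positive semidefinite covariance matrices Σ_n such that, with X, Y ~ N(0, Σ_n) independent centered Gaussian vectors in R^n, the sample correlation satisfies √n · ρ_n → N(0, σ²) in distribution. (Explicitly, with l_0 = ⌈n/σ²⌉, one may take Σ_n = (1/n)11ᵀ + Σ_{i=2}^{n} λ̃_{i−1} v_i v_iᵀ, where (1/√n)1, v_2, …, v_n is any orthonormal basis of R^n and λ̃_1 = … = λ̃_{l_0} = 1, λ̃_i = 0 for i > l_0.) -/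
open MeasureTheory ProbabilityTheory Filter Topology Matrix

noncomputable section

/-- Sample correlation `ρₙ`. -/
def sampleCorr {ι : Type*} [Fintype ι] (x y : ι → ℝ) : ℝ :=
  (∑ i, (x i - sampleMean x) * (y i - sampleMean y)) /
    (Real.sqrt (∑ i, (x i - sampleMean x) ^ 2) * Real.sqrt (∑ i, (y i - sampleMean y) ^ 2))

/-- Convergence in probability to a constant, for a sequence of laws on `ℝ`. -/
def TendstoInProbability (μ : ℕ → Measure ℝ) (c : ℝ) : Prop :=
  ∀ ε : ℝ, 0 < ε → Tendsto (fun n => μ n {x | ε ≤ |x - c|}) atTop (𝓝 0)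

/-- `μ` is the centered multivariate Gaussian law `N(0, S)` on `ℝ^n`, characterized à la
Cramér–Wold: every linear functional `⟨a, ·⟩` has law `N(0, aᵀ S a)`. -/
def IsCenteredGaussian {n : ℕ} (μ : Measure (Fin n → ℝ)) (S : Matrix (Fin n) (Fin n) ℝ) : Prop :=
  IsProbabilityMeasure μ ∧
    ∀ a : Fin n → ℝ,
      Measure.map (fun x => ∑ i, a i * x i) μ =
        gaussianReal 0 (Real.toNNReal (a ⬝ᵥ S.mulVec a))

/-- Existence of an orthonormal family orthogonal to the all-ones vector. -/
lemma exists_family (n l : ℕ) (hl : l ≤ n - 1) :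
    ∃ v : ℕ → Fin n → ℝ, (∀ k < l, ∑ i, v k i = 0) ∧
      ∀ j < l, ∀ k < l, ∑ i, v j i * v k i = if j = k then 1 else 0 := by
  rcases n with _ | m
  · refine ⟨fun _ _ => 0, ?_, ?_⟩ <;> intro k hk <;> omega
  let e : EuclideanSpace ℝ (Fin (m+1)) := WithLp.toLp 2 (fun _ => (1:ℝ))
  have he : e ≠ 0 := by
    intro h
    have := congrArg (fun x : EuclideanSpace ℝ (Fin (m+1)) => x 0) h
    simp [e] at this
  have : Fact (Module.finrank ℝ (EuclideanSpace ℝ (Fin (m+1))) = m + 1) := ⟨by simp⟩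
  have hK : Module.finrank ℝ (Submodule.span ℝ {e})ᗮ = m :=
    Submodule.finrank_orthogonal_span_singleton he
  let b := stdOrthonormalBasis ℝ (Submodule.span ℝ {e})ᗮ
  let v : ℕ → EuclideanSpace ℝ (Fin (m+1)) := fun k => if h : k < Module.finrank ℝ (Submodule.span ℝ {e})ᗮ then
    ((b ⟨k, h⟩ : (Submodule.span ℝ {e})ᗮ) : EuclideanSpace ℝ (Fin (m+1))) else 0
  refine ⟨fun k i => v k i, ?_, ?_⟩
  · intro k hk
    have h : k < Module.finrank ℝ (Submodule.span ℝ {e})ᗮ := by omega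
    have h1 : inner ℝ e (v k) = 0 := by
      simp only [v, h, dif_pos]
      exact Submodule.mem_orthogonal_singleton_iff_inner_right.1 (b ⟨k, h⟩).2
    simpa [PiLp.inner_apply, e] using h1
  · intro j hj k hk
    have h : k < Module.finrank ℝ (Submodule.span ℝ {e})ᗮ := by omega
    have h' : j < Module.finrank ℝ (Submodule.span ℝ {e})ᗮ := by omega
    have h1 : inner ℝ (v k) (v j) = if j = k then 1 else 0 := by
      simp only [v, h, h', dif_pos]
      rw [← Submodule.coe_inner, orthonormal_iff_ite.1 b.orthonormal]
      simp [eq_comm]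
    simpa [PiLp.inner_apply] using h1

/-- Sample space. -/
abbrev Om := ℕ → Bool → ℝ

def PP : Measure Om :=
  Measure.infinitePi (fun _ : ℕ => Measure.infinitePi (fun _ : Bool => gaussianReal 0 1))

instance : IsProbabilityMeasure PP := by unfold PP; infer_instance

lemma meas_eval (k : ℕ) (b : Bool) : Measurable (fun ω : Om => ω k b) := by fun_prop

lemma indep_all : iIndepFun (fun (p : ℕ × Bool) (ω : Om) => ω p.1 p.2) PP :=
  iIndepFun_uncurry_infinitePi' (X := fun _ _ x => x)
    (fun (_ : ℕ) (_ : Bool) => gaussianReal 0 1) (by fun_prop)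

lemma indep_fun (u : (Bool → ℝ) → ℝ) (hu : Measurable u) :
    iIndepFun (fun (k : ℕ) (ω : Om) => u (ω k)) PP :=
  iIndepFun_infinitePi (X := fun _ x => u x) (fun _ => hu)

lemma map_eval (k : ℕ) : PP.map (fun ω : Om => ω k) =
    Measure.infinitePi (fun _ : Bool => gaussianReal 0 1) :=
  Measure.infinitePi_map_eval _ k

lemma ident_fun (u : (Bool → ℝ) → ℝ) (hu : Measurable u) (k : ℕ) :
    IdentDistrib (fun ω : Om => u (ω k)) (fun ω : Om => u (ω 0)) PP PP := by
  have : IdentDistrib (fun ω : Om => ω k) (fun ω : Om => ω 0) PP PP :=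
    ⟨(measurable_pi_apply k).aemeasurable, (measurable_pi_apply 0).aemeasurable,
      by rw [map_eval, map_eval]⟩
  exact this.comp hu

lemma law_eval (k : ℕ) (b : Bool) : PP.map (fun ω : Om => ω k b) = gaussianReal 0 1 := by
  have h : (fun ω : Om => ω k b) = (fun x : Bool → ℝ => x b) ∘ (fun ω : Om => ω k) := rfl
  rw [h, ← Measure.map_map (by fun_prop) (by fun_prop), map_eval]
  exact Measure.infinitePi_map_eval _ b

lemma memLp_eval (k : ℕ) (b : Bool) : MemLp (fun ω : Om => ω k b) 2 PP := by
  have h := memLp_id_gaussianReal' (μ := 0) (v := 1) 2 (by simp)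
  rw [← law_eval k b] at h
  exact h.comp_of_map (meas_eval k b).aemeasurable

lemma mean_eval (k : ℕ) (b : Bool) : ∫ ω : Om, ω k b ∂PP = 0 := by
  have h := integral_map (μ := PP) (φ := fun ω : Om => ω k b) (f := fun x : ℝ => x)
    (meas_eval k b).aemeasurable (by fun_prop)
  rw [law_eval, integral_id_gaussianReal] at h
  exact h.symm

lemma sq_eval (k : ℕ) (b : Bool) : ∫ ω : Om, (ω k b) ^ 2 ∂PP = 1 := by
  have h := variance_eq_sub (memLp_eval k b)
  have h2 := variance_map (μ := PP) (X := fun x : ℝ => x) (Y := fun ω : Om => ω k b)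
    (by fun_prop) (meas_eval k b).aemeasurable
  rw [law_eval, variance_fun_id_gaussianReal] at h2
  rw [mean_eval] at h
  have h3 : Var[fun ω : Om => ω k b; PP] = 1 := by rw [← NNReal.coe_one, h2]; rfl
  rw [h3] at h
  simpa using h.symm

lemma indep_pair (k : ℕ) : IndepFun (fun ω : Om => ω k false) (fun ω : Om => ω k true) PP :=
  indep_all.indepFun (i := (k, false)) (j := (k, true)) (by simp)

lemma law_sum (b : Bool) (c : ℕ → ℝ) (l : ℕ) :
    PP.map (fun ω : Om => ∑ k ∈ Finset.range l, c k * ω k b) =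
      gaussianReal 0 (Real.toNNReal (∑ k ∈ Finset.range l, c k ^ 2)) := by
  have hind : iIndepFun (fun (k : ℕ) (ω : Om) => c k * ω k b) PP :=
    iIndepFun_infinitePi (X := fun k (x : Bool → ℝ) => c k * x b) (by fun_prop)
  have hlaw : ∀ k, PP.map (fun ω : Om => c k * ω k b) =
      gaussianReal 0 (Real.toNNReal (c k ^ 2)) := by
    intro k
    have h := gaussianReal_map_const_mul (μ := 0) (v := 1) (c k)
    rw [← law_eval k b, Measure.map_map (by fun_prop) (by fun_prop)] at h
    refine h.trans ?_
    congr 1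
    · simp
    · ext; simp [sq_nonneg]
  induction l with
  | zero => simp [gaussianReal_zero_var]
  | succ l ih =>
    have h1 : IndepFun (fun ω : Om => ∑ k ∈ Finset.range l, c k * ω k b)
        (fun ω : Om => c l * ω l b) PP := by
      have := hind.indepFun_sum_range_succ (by fun_prop) l
      convert this using 1
      ext ω; simp
    have h2 := gaussianReal_add_gaussianReal_of_indepFun h1 ih (hlaw l)
    have h3 : (fun ω : Om => ∑ k ∈ Finset.range (l+1), c k * ω k b) =
      (fun ω : Om => ∑ k ∈ Finset.range l, c k * ω k b) + (fun ω : Om => c l * ω l b) := by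
      ext ω; simp [Finset.sum_range_succ]
    rw [h3, h2, Finset.sum_range_succ, Real.toNNReal_add (Finset.sum_nonneg fun _ _ => sq_nonneg _)
      (sq_nonneg _)]
    simp

/-- Strong law for squares. -/
lemma slln_sq (b : Bool) : ∀ᵐ ω ∂PP,
    Tendsto (fun n : ℕ => (∑ k ∈ Finset.range n, (ω k b) ^ 2) / (n : ℝ)) atTop (𝓝 1) := by
  have h := strong_law_ae_real (μ := PP) (fun (k : ℕ) (ω : Om) => (ω k b) ^ 2)
    (memLp_eval 0 b).integrable_sq
    (fun i j hij => (indep_fun (fun x => x b ^ 2) (by fun_prop)).indepFun hij)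
    (ident_fun (fun x => x b ^ 2) (by fun_prop))
  rw [sq_eval] at h
  exact h

lemma clt_prod : MeasureTheory.TendstoInDistribution
    (fun (n : ℕ) (ω : Om) => (√n)⁻¹ * ∑ k ∈ Finset.range n, ω k false * ω k true) atTop
    (fun x : ℝ => x) (fun _ => PP) (gaussianReal 0 1) := by
  refine tendstoInDistribution_inv_sqrt_mul_sum (X := fun k (ω : Om) => ω k false * ω k true)
    ⟨by fun_prop, by simp⟩ ?_ ?_
    (indep_fun (fun x => x false * x true) (by fun_prop))
    (ident_fun (fun x => x false * x true) (by fun_prop))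
  · rw [(indep_pair 0).integral_fun_mul_eq_mul_integral
      (meas_eval 0 false).aestronglyMeasurable (meas_eval 0 true).aestronglyMeasurable]
    simp [mean_eval]
  · have h := ((indep_pair 0).comp (φ := fun x => x ^ 2) (ψ := fun x => x ^ 2)
      (by fun_prop) (by fun_prop)).integral_fun_mul_eq_mul_integral
      ((meas_eval 0 false).pow_const 2).aestronglyMeasurable
      ((meas_eval 0 true).pow_const 2).aestronglyMeasurable
    simp only [Function.comp_apply, sq_eval] at h
    simpa [mul_pow] using h

lemma main_limit (σ2 : ℝ) (hσ2 : 1 ≤ σ2) (l : ℕ → ℕ) (hl : Tendsto l atTop atTop)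
    (hr : Tendsto (fun n : ℕ => (l n : ℝ) / n) atTop (𝓝 σ2⁻¹)) :
    MeasureTheory.TendstoInDistribution
    (fun (n : ℕ) (ω : Om) => √n * ((∑ k ∈ Finset.range (l n), ω k false * ω k true) /
      (√(∑ k ∈ Finset.range (l n), ω k false ^ 2) * √(∑ k ∈ Finset.range (l n), ω k true ^ 2))))
    atTop (fun x : ℝ => x * √σ2) (fun _ => PP) (gaussianReal 0 1) := by
  have hA : MeasureTheory.TendstoInDistribution
    (fun (n : ℕ) (ω : Om) => (√(l n))⁻¹ * ∑ k ∈ Finset.range (l n), ω k false * ω k true) atTop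
    (fun x : ℝ => x) (fun _ => PP) (gaussianReal 0 1) :=
    ⟨fun n => clt_prod.forall_aemeasurable (l n), clt_prod.aemeasurable_limit,
      clt_prod.tendsto.comp hl⟩
  let W : ℕ → Om → ℝ := fun n ω => √n * √(l n) /
      (√(∑ k ∈ Finset.range (l n), ω k false ^ 2) * √(∑ k ∈ Finset.range (l n), ω k true ^ 2))
  have hWm : ∀ n, Measurable (W n) := by intro n; fun_prop
  have hW : ∀ᵐ ω ∂PP, Tendsto (fun n => W n ω) atTop (𝓝 (√σ2)) := by
    filter_upwards [slln_sq false, slln_sq true] with ω h1 h2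
    have h1' := (h1.comp hl).sqrt
    have h2' := (h2.comp hl).sqrt
    have hr' := (hr.inv₀ (by positivity)).sqrt
    have h := hr'.div (h1'.mul h2') (by simp)
    simp only [Real.sqrt_one, mul_one, div_one, inv_inv] at h
    refine h.congr' ?_
    filter_upwards [hl.eventually_gt_atTop 0] with n hn
    have hn' : (0:ℝ) < l n := by exact_mod_cast hn
    have : √(l n : ℝ) ≠ 0 := by positivity
    simp only [W, Function.comp_apply, inv_div, Pi.div_apply]
    rw [Real.sqrt_div' _ hn'.le, Real.sqrt_div' _ hn'.le, Real.sqrt_div' _ hn'.le]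
    field_simp
  have hWP : TendstoInMeasure PP W atTop (fun _ => √σ2) :=
    tendstoInMeasure_of_tendsto_ae (fun n => (hWm n).aestronglyMeasurable) hW
  have := hA.continuous_comp_prodMk_of_tendstoInMeasure_const
    (g := fun x : ℝ × ℝ => x.1 * x.2) (by fun_prop) hWP (fun n => (hWm n).aemeasurable)
  convert this using 3 with n ω
  simp only [W]
  rcases Nat.eq_zero_or_pos (l n) with h0 | h0
  · simp [h0]
  · have : √(l n : ℝ) ≠ 0 := by positivity
    field_simp

lemma gauss_scale (σ2 : ℝ) (hσ2 : 1 ≤ σ2) :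
    (gaussianReal 0 1).map (fun x : ℝ => x * √σ2) = gaussianReal 0 (Real.toNNReal σ2) := by
  have h := gaussianReal_map_mul_const (μ := 0) (v := 1) (√σ2)
  refine h.trans ?_
  congr 1
  · simp
  · ext
    have : 0 ≤ σ2 := by linarith
    simp [this, Real.sq_sqrt]

/-- The Gaussian vector. -/
def gvec {n : ℕ} (v : ℕ → Fin n → ℝ) (l : ℕ) (b : Bool) (ω : Om) : Fin n → ℝ :=
  fun i => ∑ k ∈ Finset.range l, v k i * ω k b

def covM {n : ℕ} (v : ℕ → Fin n → ℝ) (l : ℕ) : Matrix (Fin n) (Fin n) ℝ :=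
  let V : Matrix (Fin l) (Fin n) ℝ := Matrix.of fun k i => v k i
  Vᴴ * V

lemma meas_vec {n : ℕ} (v : ℕ → Fin n → ℝ) (l : ℕ) (b : Bool) : Measurable (gvec v l b) := by
  unfold gvec; fun_prop

lemma covM_quad {n : ℕ} (v : ℕ → Fin n → ℝ) (l : ℕ) (a : Fin n → ℝ) :
    a ⬝ᵥ (covM v l).mulVec a = ∑ k ∈ Finset.range l, (∑ i, a i * v k i) ^ 2 := by
  simp only [covM, conjTranspose_eq_transpose_of_trivial]
  rw [← Matrix.mulVec_mulVec, Matrix.dotProduct_mulVec, Matrix.vecMul_transpose,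
    Finset.sum_range]
  simp [dotProduct, mulVec, sq, mul_comm]

lemma gauss_vec {n : ℕ} (v : ℕ → Fin n → ℝ) (l : ℕ) (b : Bool) :
    IsCenteredGaussian (PP.map (gvec v l b)) (covM v l) := by
  refine ⟨Measure.isProbabilityMeasure_map (meas_vec v l b).aemeasurable, fun a => ?_⟩
  rw [Measure.map_map (by fun_prop) (meas_vec v l b), covM_quad, ← law_sum b]
  congr 1
  ext ω
  simp only [gvec, Function.comp_apply, Finset.mul_sum, Finset.sum_mul]
  rw [Finset.sum_comm]
  simp only [mul_assoc]

lemma indep_vec {n : ℕ} (v : ℕ → Fin n → ℝ) (l : ℕ) :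
    IndepFun (gvec v l false) (gvec v l true) PP := by
  have h := indep_all.indepFun_finset (Finset.range l ×ˢ {false}) (Finset.range l ×ˢ {true})
    (by rw [Finset.disjoint_left]; rintro ⟨k, b⟩; simp; grind)
    (fun p => meas_eval p.1 p.2)
  have key : ∀ b, gvec v l b = (fun (x : ((Finset.range l ×ˢ {b} : Finset (ℕ × Bool)) → ℝ)) i =>
      ∑ k ∈ (Finset.range l).attach, v k i * x ⟨(k, b), by simp⟩) ∘
      (fun (ω : Om) (p : (Finset.range l ×ˢ {b} : Finset (ℕ × Bool))) => ω p.1.1 p.1.2) := by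
    intro b
    ext ω i
    simp only [gvec, Function.comp_apply]
    exact (Finset.sum_attach (Finset.range l) (fun k => v k i * ω k b)).symm
  rw [key false, key true]
  exact h.comp (by fun_prop) (by fun_prop)

lemma corr_vec {n : ℕ} (v : ℕ → Fin n → ℝ) (l : ℕ) (h0 : ∀ k < l, ∑ i, v k i = 0)
    (h1 : ∀ j < l, ∀ k < l, ∑ i, v j i * v k i = if j = k then 1 else 0) (ω : Om) :
    sampleCorr (gvec v l false ω) (gvec v l true ω) =
    (∑ k ∈ Finset.range l, ω k false * ω k true) /
      (√(∑ k ∈ Finset.range l, ω k false ^ 2) * √(∑ k ∈ Finset.range l, ω k true ^ 2)) := by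
  have hm : ∀ b, sampleMean (gvec v l b ω) = 0 := by
    intro b
    have : ∑ i, gvec v l b ω i = 0 := by
      simp only [gvec]
      rw [Finset.sum_comm]
      refine Finset.sum_eq_zero fun k hk => ?_
      rw [← Finset.sum_mul, h0 k (Finset.mem_range.1 hk), zero_mul]
    simp [sampleMean, this]
  have hp : ∀ b c, ∑ i, gvec v l b ω i * gvec v l c ω i =
      ∑ k ∈ Finset.range l, ω k b * ω k c := by
    intro b c
    simp only [gvec, Finset.sum_mul_sum]
    rw [Finset.sum_comm]
    refine Finset.sum_congr rfl fun j hj => ?_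
    rw [Finset.sum_comm]
    have : ∀ k ∈ Finset.range l, ∑ i, v j i * ω j b * (v k i * ω k c) =
        if j = k then ω j b * ω k c else 0 := by
      intro k hk
      have := h1 j (Finset.mem_range.1 hj) k (Finset.mem_range.1 hk)
      calc _ = (∑ i, v j i * v k i) * (ω j b * ω k c) := by
            rw [Finset.sum_mul]; exact Finset.sum_congr rfl fun i _ => by ring
        _ = _ := by rw [this]; split_ifs <;> simp
    rw [Finset.sum_congr rfl this, Finset.sum_ite_eq, if_pos hj]
  simp only [sampleCorr, hm, sub_zero, sq, hp]

/-- Number of nonzero eigenvalues. -/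
def ell (σ2 : ℝ) (n : ℕ) : ℕ := ⌊σ2⁻¹ * ((n - 1 : ℕ) : ℝ)⌋₊

lemma ell_le (σ2 : ℝ) (hσ2 : 1 ≤ σ2) (n : ℕ) : ell σ2 n ≤ n - 1 := by
  refine Nat.floor_le_of_le ?_
  exact mul_le_of_le_one_left (Nat.cast_nonneg _) (inv_le_one_of_one_le₀ hσ2)

lemma ell_tendsto (σ2 : ℝ) (hσ2 : 1 ≤ σ2) : Tendsto (ell σ2) atTop atTop := by
  have h : Tendsto (fun n : ℕ => σ2⁻¹ * ((n - 1 : ℕ) : ℝ)) atTop atTop :=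
    (tendsto_natCast_atTop_atTop.comp (tendsto_sub_atTop_nat 1)).const_mul_atTop (by positivity)
  exact tendsto_nat_floor_atTop.comp h

lemma ell_ratio (σ2 : ℝ) (hσ2 : 1 ≤ σ2) :
    Tendsto (fun n : ℕ => (ell σ2 n : ℝ) / n) atTop (𝓝 σ2⁻¹) := by
  have h1 := (tendsto_nat_floor_mul_div_atTop (R := ℝ) (a := σ2⁻¹) (by positivity)).comp
    (tendsto_natCast_atTop_atTop.comp (tendsto_sub_atTop_nat 1))
  have h2 : Tendsto (fun n : ℕ => ((n - 1 : ℕ) : ℝ) / n) atTop (𝓝 1) := by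
    have h3 : Tendsto (fun n : ℕ => 1 - (1 : ℝ) / n) atTop (𝓝 (1 - 0)) :=
      tendsto_const_nhds.sub tendsto_one_div_atTop_nhds_zero_nat
    rw [sub_zero] at h3
    refine h3.congr' ?_
    filter_upwards [eventually_ge_atTop 1] with n hn
    have : (n : ℝ) ≠ 0 := by positivity
    rw [Nat.cast_sub hn]; field_simp; simp
  have h := h1.mul h2
  rw [mul_one] at h
  refine h.congr' ?_
  filter_upwards [eventually_ge_atTop 2] with n hn
  have h4 : ((n - 1 : ℕ) : ℝ) ≠ 0 := by
    have : n - 1 ≠ 0 := by omega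
    exact_mod_cast this
  simp only [Function.comp_apply, ell]
  field_simp

/-- **(Arbitrary limiting variance for the sample correlation).** For every `σ² ≥ 1` there is
a sequence of positive semidefinite covariance matrices `Σₙ` such that, for independent
`X, Y ~ N(0, Σₙ)`, the sample correlation satisfies `√n ρₙ →d N(0, σ²)`. -/
theorem exists_cov_with_inflated_correlation (σ2 : ℝ) (hσ2 : 1 ≤ σ2) :
    ∃ (S : (n : ℕ) → Matrix (Fin n) (Fin n) ℝ) (μ ν : (n : ℕ) → Measure (Fin n → ℝ)),
      (∀ n, (S n).PosSemidef) ∧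
      (∀ n, IsCenteredGaussian (μ n) (S n)) ∧
      (∀ n, IsCenteredGaussian (ν n) (S n)) ∧
      TendstoInDistribution
        (fun n => Measure.map
          (fun p : (Fin n → ℝ) × (Fin n → ℝ) => Real.sqrt n * sampleCorr p.1 p.2)
          ((μ n).prod (ν n)))
        (gaussianReal 0 (Real.toNNReal σ2)) := by
  choose v hv0 hv1 using fun n => exists_family n (ell σ2 n) (ell_le σ2 hσ2 n)
  refine ⟨fun n => covM (v n) (ell σ2 n), fun n => PP.map (gvec (v n) (ell σ2 n) false),
    fun n => PP.map (gvec (v n) (ell σ2 n) true), fun n => ?_, fun n => gauss_vec _ _ _,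
    fun n => gauss_vec _ _ _, ?_⟩
  · exact Matrix.posSemidef_conjTranspose_mul_self _
  have hlim := main_limit σ2 hσ2 (ell σ2) (ell_tendsto σ2 hσ2) (ell_ratio σ2 hσ2)
  have hlaw : ∀ n : ℕ, Measure.map
      (fun p : (Fin n → ℝ) × (Fin n → ℝ) => Real.sqrt n * sampleCorr p.1 p.2)
      ((PP.map (gvec (v n) (ell σ2 n) false)).prod (PP.map (gvec (v n) (ell σ2 n) true))) =
      PP.map (fun ω : Om => √n * ((∑ k ∈ Finset.range (ell σ2 n), ω k false * ω k true) /
        (√(∑ k ∈ Finset.range (ell σ2 n), ω k false ^ 2) *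
          √(∑ k ∈ Finset.range (ell σ2 n), ω k true ^ 2)))) := by
    intro n
    rw [← (indep_vec (v n) (ell σ2 n)).map_prod_eq_prod_map_map
      (meas_vec _ _ _).aemeasurable (meas_vec _ _ _).aemeasurable,
      Measure.map_map (by unfold sampleCorr sampleMean; fun_prop)
        ((meas_vec _ _ _).prodMk (meas_vec _ _ _))]
    congr 1
    ext ω
    simp only [Function.comp_apply]
    rw [corr_vec (v n) (ell σ2 n) (hv0 n) (hv1 n)]
  intro f
  have ht := ProbabilityMeasure.tendsto_iff_forall_integral_tendsto.1 hlim.tendsto f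
  simp only [hlaw]
  rw [← gauss_scale σ2 hσ2]
  exact ht

end
end

section
/- Fix 0 < ρ < 1 and for each n let Σ = (1−ρ)I_n + ρ 11ᵀ be the n×n equicorrelation matrix, and let X, Y ~ N(0, Σ) be independent centered Gaussian vectors in R^n. Then: (i) √n · T_n converges in distribution to N(0, (1−ρ)²); and (ii) √n · ρ_n converges in distribution to N(0, 1). -/
open MeasureTheory ProbabilityTheory Filter Topology Matrix

noncomputable section

/-- The equicorrelation matrix `Σ = (1-ρ)I + ρ 11ᵀ`. -/
def equicorr (n : ℕ) (ρ : ℝ) : Matrix (Fin n) (Fin n) ℝ :=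
  Matrix.of fun i j => if i = j then 1 else ρ


theorem eg_fourth (v : NNReal) : ∫ x, x ^ 4 ∂(gaussianReal 0 v) = 3 * (v : ℝ) ^ 2 := by
  have h := iteratedDeriv_mgf_zero (X := id) (μ := gaussianReal 0 v) (by simp) 4
  have hm : mgf id (gaussianReal 0 v) = fun t => Real.exp ((v : ℝ) * t ^ 2 / 2) := by
    rw [mgf_id_gaussianReal]; ext t; simp
  have key : ∀ (p p' : ℝ → ℝ), (∀ t, HasDerivAt p (p' t) t) →
      deriv (fun t => p t * Real.exp ((v : ℝ) * t ^ 2 / 2)) =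
      fun t => (p' t + v * t * p t) * Real.exp ((v : ℝ) * t ^ 2 / 2) := by
    intro p p' hp
    ext t
    have h1 : HasDerivAt (fun t : ℝ => (v : ℝ) * t ^ 2 / 2) (v * t) t := by
      have := (((hasDerivAt_id t).pow 2).const_mul (v : ℝ)).div_const 2
      refine HasDerivAt.congr_deriv this ?_
      simp; ring
    have := ((hp t).mul h1.exp).deriv
    refine this.trans ?_
    ring
  have e0 : mgf id (gaussianReal 0 v) = fun t => (fun _ => 1) t * Real.exp ((v : ℝ) * t ^ 2 / 2) := by
    rw [hm]; simp
  have h1 := key (fun _ => 1) (fun _ => 0) (fun t => hasDerivAt_const t 1)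
  have h2 := key (fun t => v * t) (fun _ => v) (fun t => by
    simpa using (hasDerivAt_id t).const_mul (v : ℝ))
  have h3 := key (fun t => v + v ^ 2 * t ^ 2) (fun t => 2 * v ^ 2 * t) (fun t => by
    have := (((hasDerivAt_id t).pow 2).const_mul ((v : ℝ) ^ 2)).const_add (v : ℝ)
    refine HasDerivAt.congr_deriv this ?_; simp; ring)
  have h4 := key (fun t => 3 * v ^ 2 * t + v ^ 3 * t ^ 3) (fun t => 3 * v ^ 2 + 3 * v ^ 3 * t ^ 2)
    (fun t => by
    have := ((hasDerivAt_id t).const_mul (3 * (v : ℝ) ^ 2)).add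
      (((hasDerivAt_id t).pow 3).const_mul ((v : ℝ) ^ 3))
    refine HasDerivAt.congr_deriv this ?_; simp; ring)
  rw [e0] at h
  simp only [iteratedDeriv_succ', iteratedDeriv_zero] at h
  rw [h1] at h
  rw [show (fun t : ℝ => ((0 : ℝ) + v * t * 1) * Real.exp ((v : ℝ) * t ^ 2 / 2)) =
    fun t => (v * t) * Real.exp ((v : ℝ) * t ^ 2 / 2) by ext t; ring, h2] at h
  rw [show (fun t : ℝ => ((v : ℝ) + v * t * (v * t)) * Real.exp ((v : ℝ) * t ^ 2 / 2)) =
    fun t => (v + v ^ 2 * t ^ 2) * Real.exp ((v : ℝ) * t ^ 2 / 2) by ext t; ring, h3] at h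
  rw [show (fun t : ℝ => (2 * (v : ℝ) ^ 2 * t + v * t * (v + v ^ 2 * t ^ 2)) *
      Real.exp ((v : ℝ) * t ^ 2 / 2)) =
    fun t => (3 * v ^ 2 * t + v ^ 3 * t ^ 3) * Real.exp ((v : ℝ) * t ^ 2 / 2) by ext t; ring, h4] at h
  simpa using h.symm

theorem eg_second (v : NNReal) : ∫ x, x ^ 2 ∂(gaussianReal 0 v) = (v : ℝ) := by
  have h := variance_fun_id_gaussianReal (μ := 0) (v := v)
  rw [variance_of_integral_eq_zero (by fun_prop) (by simp)] at h
  exact h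

theorem eg_int_pow (v : NNReal) (k : ℕ) : Integrable (fun x => x ^ k) (gaussianReal 0 v) := by
  have := (memLp_id_gaussianReal (μ := 0) (v := v) k)
  rcases Nat.eq_zero_or_pos k with rfl | hk
  · simp
  have h2 := (this.integrable_norm_pow (by omega))
  refine h2.mono' (by fun_prop) (ae_of_all _ fun x => ?_)
  simp

/-- Linear functional -/
def egL {n : ℕ} (c x : Fin n → ℝ) : ℝ := ∑ i, c i * x i

/-- The property we use. -/
def EgH {n : ℕ} (s : ℝ) (μ : Measure (Fin n → ℝ)) : Prop :=
  IsProbabilityMeasure μ ∧ ∀ c : Fin n → ℝ, ∑ i, c i = 0 →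
    Measure.map (egL c) μ = gaussianReal 0 (Real.toNNReal (s * ∑ i, c i ^ 2))

theorem egH_of {n : ℕ} {ρ : ℝ} {μ : Measure (Fin n → ℝ)}
    (h : IsCenteredGaussian μ (equicorr n ρ)) : EgH (1 - ρ) μ := by
  refine ⟨h.1, fun c hc => ?_⟩
  have := h.2 c
  unfold egL
  rw [this]
  congr 2
  have : ∀ i, (equicorr n ρ).mulVec c i = (1 - ρ) * c i := by
    intro i
    have : ∀ j, equicorr n ρ i j * c j = ρ * c j + if i = j then (1 - ρ) * c j else 0 := by
      intro j
      simp only [equicorr, Matrix.of_apply]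
      split_ifs <;> ring
    simp only [Matrix.mulVec, dotProduct, this, Finset.sum_add_distrib, ← Finset.mul_sum, hc]
    simp
  simp only [dotProduct, this, Finset.mul_sum]
  exact Finset.sum_congr rfl fun i _ => by ring

theorem egL_meas {n : ℕ} (c : Fin n → ℝ) : Measurable (egL c) := by
  unfold egL; fun_prop

section
variable {n : ℕ} {s : ℝ} {μ : Measure (Fin n → ℝ)}

theorem eg_int (hs : 0 < s) (h : EgH s μ) (c : Fin n → ℝ) (hc : ∑ i, c i = 0) (k : ℕ) :
    Integrable (fun x => egL c x ^ k) μ := by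
  have := eg_int_pow (Real.toNNReal (s * ∑ i, c i ^ 2)) k
  rw [← h.2 c hc] at this
  exact (integrable_map_measure (measurable_id.pow_const k).aestronglyMeasurable (egL_meas c).aemeasurable).1 this

theorem eg_L2 (hs : 0 < s) (h : EgH s μ) (c : Fin n → ℝ) (hc : ∑ i, c i = 0) :
    ∫ x, egL c x ^ 2 ∂μ = s * ∑ i, c i ^ 2 := by
  have := eg_second (Real.toNNReal (s * ∑ i, c i ^ 2))
  rw [← h.2 c hc, integral_map (egL_meas c).aemeasurable (by fun_prop), Real.coe_toNNReal] at this
  · exact this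
  · positivity

theorem eg_L4 (hs : 0 < s) (h : EgH s μ) (c : Fin n → ℝ) (hc : ∑ i, c i = 0) :
    ∫ x, egL c x ^ 4 ∂μ = 3 * (s * ∑ i, c i ^ 2) ^ 2 := by
  have := eg_fourth (Real.toNNReal (s * ∑ i, c i ^ 2))
  rw [← h.2 c hc, integral_map (egL_meas c).aemeasurable (by fun_prop), Real.coe_toNNReal] at this
  · exact this
  · positivity

theorem eg_L22 (hs : 0 < s) (h : EgH s μ) (c d : Fin n → ℝ) (hc : ∑ i, c i = 0)
    (hd : ∑ i, d i = 0) :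
    Integrable (fun x => egL c x ^ 2 * egL d x ^ 2) μ ∧
    ∫ x, egL c x ^ 2 * egL d x ^ 2 ∂μ =
      s ^ 2 * ((∑ i, c i ^ 2) * (∑ i, d i ^ 2) + 2 * (∑ i, c i * d i) ^ 2) := by
  have hcd : ∑ i, (c + d) i = 0 := by simp [Finset.sum_add_distrib, hc, hd]
  have hcd' : ∑ i, (c - d) i = 0 := by simp [Finset.sum_sub_distrib, hc, hd]
  have e : (fun x => egL c x ^ 2 * egL d x ^ 2) = fun x =>
      (1 / 12) * (egL (c + d) x ^ 4 + egL (c - d) x ^ 4 - (2 * egL c x ^ 4 + 2 * egL d x ^ 4)) := by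
    ext x
    have h1 : egL (c + d) x = egL c x + egL d x := by
      simp [egL, ← Finset.sum_add_distrib, add_mul]
    have h2 : egL (c - d) x = egL c x - egL d x := by
      simp [egL, ← Finset.sum_sub_distrib, sub_mul]
    rw [h1, h2]; ring
  have i1 := eg_int hs h _ hcd 4
  have i2 := eg_int hs h _ hcd' 4
  have i3 := (eg_int hs h _ hc 4).const_mul 2
  have i4 := (eg_int hs h _ hd 4).const_mul 2
  have i12 : Integrable (fun x => egL (c + d) x ^ 4 + egL (c - d) x ^ 4) μ := i1.add i2
  have i34 : Integrable (fun x => 2 * egL c x ^ 4 + 2 * egL d x ^ 4) μ := i3.add i4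
  rw [e]
  refine ⟨((i1.add i2).sub (i3.add i4)).const_mul _, ?_⟩
  rw [integral_const_mul, integral_sub i12 i34, integral_add i1 i2,
    integral_add i3 i4, integral_const_mul, integral_const_mul, eg_L4 hs h _ hcd,
    eg_L4 hs h _ hcd', eg_L4 hs h _ hc, eg_L4 hs h _ hd]
  have h1 : ∑ i, (c + d) i ^ 2 = ∑ i, c i ^ 2 + ∑ i, d i ^ 2 + 2 * ∑ i, c i * d i := by
    rw [Finset.mul_sum, ← Finset.sum_add_distrib, ← Finset.sum_add_distrib]
    exact Finset.sum_congr rfl fun i _ => by simp; ring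
  have h2 : ∑ i, (c - d) i ^ 2 = ∑ i, c i ^ 2 + ∑ i, d i ^ 2 - 2 * ∑ i, c i * d i := by
    rw [Finset.mul_sum, ← Finset.sum_add_distrib, ← Finset.sum_sub_distrib]
    exact Finset.sum_congr rfl fun i _ => by simp; ring
  rw [h1, h2]; ring

/-- Centering coefficients. -/
def egC (n : ℕ) (i : Fin n) : Fin n → ℝ := fun k => (if i = k then 1 else 0) - 1 / (n : ℝ)

theorem egC_L (i : Fin n) (x : Fin n → ℝ) : egL (egC n i) x = x i - sampleMean x := by
  simp [egL, egC, sampleMean, sub_mul, Finset.sum_sub_distrib, ← Finset.mul_sum]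
  ring

theorem egC_sum (hn : 0 < n) (i : Fin n) : ∑ k, egC n i k = 0 := by
  have : (n : ℝ) ≠ 0 := by positivity
  simp [egC, Finset.sum_sub_distrib, this]

theorem egC_dot (hn : 0 < n) (i j : Fin n) :
    ∑ k, egC n i k * egC n j k = (if i = j then 1 else 0) - 1 / (n : ℝ) := by
  have : (n : ℝ) ≠ 0 := by positivity
  have e : ∀ k, egC n i k * egC n j k = (if i = k then egC n j k else 0) - 1 / n * egC n j k := by
    intro k
    conv_lhs => rw [egC]
    split_ifs <;> ring
  simp only [e, Finset.sum_sub_distrib, ← Finset.mul_sum, egC_sum hn]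
  simp [egC, eq_comm]

/-- Sum of squares -/
def egS (x : Fin n → ℝ) : ℝ := ∑ i, (x i - sampleMean x) ^ 2

theorem egS_meas : Measurable (egS (n := n)) := by
  unfold egS sampleMean; fun_prop

theorem egV (hn : 0 < n) (hs : 0 < s) (h : EgH s μ) :
    Integrable (fun x => (egS x / (n * s) - 1) ^ 2) μ ∧
    ∫ x, (egS x / (n * s) - 1) ^ 2 ∂μ ≤ 2 / (n : ℝ) := by
  have hP := h.1
  have hn' : (n : ℝ) ≠ 0 := by positivity
  have hn0 : (0 : ℝ) < n := by positivity
  have eS : ∀ x : Fin n → ℝ, egS x = ∑ i, egL (egC n i) x ^ 2 := fun x => by simp [egS, egC_L]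
  have eS2 : ∀ x : Fin n → ℝ, egS x ^ 2 =
      ∑ i, ∑ j, egL (egC n i) x ^ 2 * egL (egC n j) x ^ 2 := fun x => by
    rw [eS, sq, Finset.sum_mul_sum]
  have sq' : ∀ i, ∑ k, egC n i k ^ 2 = 1 - 1 / (n : ℝ) := fun i => by
    simpa [sq] using egC_dot hn i i
  have I1 : Integrable (fun x => egS x) μ := by
    simp only [eS]
    exact integrable_finsetSum _ fun i _ => eg_int hs h _ (egC_sum hn i) 2
  have I2 : Integrable (fun x => egS x ^ 2) μ := by
    simp only [eS2]
    exact integrable_finsetSum _ fun i _ => integrable_finsetSum _ fun j _ =>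
      (eg_L22 hs h _ _ (egC_sum hn i) (egC_sum hn j)).1
  have E1 : ∫ x, egS x ∂μ = s * (n - 1) := by
    simp only [eS]
    rw [integral_finsetSum _ fun i _ => eg_int hs h _ (egC_sum hn i) 2]
    simp only [eg_L2 hs h _ (egC_sum hn _), sq']
    simp; field_simp
  have E2 : ∫ x, egS x ^ 2 ∂μ = s ^ 2 * (n ^ 2 - 1) := by
    simp only [eS2]
    rw [integral_finsetSum _ fun i _ => integrable_finsetSum _ fun j _ =>
      (eg_L22 hs h _ _ (egC_sum hn i) (egC_sum hn j)).1]
    have : ∀ i : Fin n, ∫ x, ∑ j, egL (egC n i) x ^ 2 * egL (egC n j) x ^ 2 ∂μ =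
        s ^ 2 * (n - 1 / n) := by
      intro i
      rw [integral_finsetSum _ fun j _ => (eg_L22 hs h _ _ (egC_sum hn i) (egC_sum hn j)).1]
      simp only [fun j => (eg_L22 hs h _ _ (egC_sum hn i) (egC_sum hn j)).2, sq', egC_dot hn]
      have e : ∀ j, s ^ 2 * ((1 - 1 / (n : ℝ)) * (1 - 1 / n) + 2 * ((if i = j then 1 else 0) - 1 / (n : ℝ)) ^ 2)
        = s ^ 2 * ((1 - 1 / (n : ℝ)) * (1 - 1 / n) + 2 / n ^ 2) +
          if i = j then s ^ 2 * (2 - 4 / n) else 0 := by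
        intro j
        split_ifs <;> ring
      simp only [e, Finset.sum_add_distrib]
      simp; field_simp; ring
    simp only [this]
    simp; field_simp
  have e : (fun x : Fin n → ℝ => (egS x / (n * s) - 1) ^ 2) = fun x =>
      (1 / (n * s) ^ 2) * egS x ^ 2 - (2 / (n * s)) * egS x + 1 := by
    ext x; ring
  rw [e]
  have J2 := I2.const_mul (1 / ((n : ℝ) * s) ^ 2)
  have J1 := I1.const_mul (2 / ((n : ℝ) * s))
  have J21 : Integrable (fun x => 1 / ((n : ℝ) * s) ^ 2 * egS x ^ 2 - 2 / ((n : ℝ) * s) * egS x) μ := J2.sub J1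
  refine ⟨(J2.sub J1).add (integrable_const _), ?_⟩
  rw [integral_add J21 (integrable_const _), integral_sub J2 J1, integral_const_mul,
    integral_const_mul, E1, E2]
  simp
  have : ((n : ℝ) * s) ≠ 0 := by positivity
  have : (((n : ℝ) * s) ^ 2)⁻¹ * (s ^ 2 * (n ^ 2 - 1)) - 2 / (n * s) * (s * (n - 1)) + 1 =
    2 / n - 1 / n ^ 2 := by
    field_simp; ring
  rw [this]
  have : (0 : ℝ) < 1 / n ^ 2 := by positivity
  linarith

end

theorem eg_exp_lip (a b : ℝ) :
    ‖Complex.exp (a * Complex.I) - Complex.exp (b * Complex.I)‖ ≤ |a - b| := by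
  have e : Complex.exp (a * Complex.I) - Complex.exp (b * Complex.I) =
      Complex.exp (b * Complex.I) * (Complex.exp (Complex.I * ((a - b : ℝ) : ℂ)) - 1) := by
    rw [mul_sub, ← Complex.exp_add, mul_one]
    congr 2
    push_cast; ring
  rw [e, norm_mul, Complex.norm_exp_ofReal_mul_I, one_mul]
  exact Real.norm_exp_I_mul_ofReal_sub_one_le

theorem eg_rexp_lip {a b : ℝ} (ha : 0 ≤ a) (hb : 0 ≤ b) :
    |Real.exp (-a) - Real.exp (-b)| ≤ |a - b| := by
  wlog hab : a ≤ b generalizing a b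
  · rw [abs_sub_comm, abs_sub_comm a]
    exact this hb ha (by linarith)
  have h1 : Real.exp (-b) = Real.exp (-a) * Real.exp (-(b - a)) := by
    rw [← Real.exp_add]; congr 1; ring
  have h2 := Real.add_one_le_exp (-(b - a))
  have h3 : Real.exp (-a) ≤ 1 := Real.exp_le_one_iff.2 (by linarith)
  have h4 := Real.exp_pos (-a)
  have h5 : Real.exp (-(b - a)) ≤ 1 := Real.exp_le_one_iff.2 (by linarith)
  rw [abs_of_nonneg (by rw [h1]; nlinarith), abs_of_nonpos (by linarith), h1]
  nlinarith

theorem eg_amgm {r : ℝ} (hr : 0 < r) (a b : ℝ) : 2 * (|a| * |b|) ≤ a ^ 2 / r + r * b ^ 2 := by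
  have h : 0 ≤ (|a| - r * |b|) ^ 2 / r := by positivity
  have : (|a| - r * |b|) ^ 2 / r = a ^ 2 / r + r * b ^ 2 - 2 * (|a| * |b|) := by
    rw [← sq_abs a, ← sq_abs b]; field_simp; ring
  linarith

theorem eg_slutsky (t G V r : ℝ) (hV : 0 ≤ V) (hr : 0 < r) :
    ‖Complex.exp ((t * (G * (1 / Real.sqrt V)) : ℝ) * Complex.I) -
      Complex.exp ((t * G : ℝ) * Complex.I)‖ ≤
    |t| * (G ^ 2 / r + r * (V - 1) ^ 2) + 3 / 2 * (1 / r + r * (V - 1) ^ 2) := by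
  have h1 := eg_amgm hr G (V - 1)
  have h2 := eg_amgm hr 1 (V - 1)
  simp only [abs_one, one_pow, one_mul] at h2
  have p1 : 0 ≤ |t| * (G ^ 2 / r + r * (V - 1) ^ 2) := by positivity
  have p2 : 0 ≤ 3 / 2 * (1 / r + r * (V - 1) ^ 2) := by positivity
  by_cases hc : V < 1 / 4
  · have : ‖Complex.exp ((t * (G * (1 / Real.sqrt V)) : ℝ) * Complex.I) -
      Complex.exp ((t * G : ℝ) * Complex.I)‖ ≤ 1 + 1 := by
      refine (norm_sub_le _ _).trans ?_
      rw [Complex.norm_exp_ofReal_mul_I, Complex.norm_exp_ofReal_mul_I]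
    have h3 : 3 / 4 ≤ |V - 1| := by
      rw [abs_of_nonpos (by linarith)]; linarith
    linarith
  · push Not at hc
    refine (eg_exp_lip _ _).trans ?_
    have hs : 1 / 2 ≤ Real.sqrt V := by
      rw [show (1 / 2 : ℝ) = Real.sqrt (1 / 4) by
        rw [show (1 / 4 : ℝ) = (1 / 2) ^ 2 by norm_num]; exact (Real.sqrt_sq (by norm_num)).symm]
      exact Real.sqrt_le_sqrt hc
    have hs0 : 0 < Real.sqrt V := by linarith
    have hq := Real.sq_sqrt hV
    have h3 : |1 / Real.sqrt V - 1| ≤ 2 * |V - 1| := by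
      have e : V - 1 = - (1 / Real.sqrt V - 1) * (Real.sqrt V * (Real.sqrt V + 1)) := by
        field_simp; rw [← hq]; simp; ring
      rw [e, abs_mul, abs_neg, abs_of_pos (show 0 < Real.sqrt V * (Real.sqrt V + 1) by positivity)]
      have : 0 ≤ |1 / Real.sqrt V - 1| := abs_nonneg _
      have : 1 / 2 ≤ Real.sqrt V * (Real.sqrt V + 1) := by nlinarith
      nlinarith
    have e : t * (G * (1 / Real.sqrt V)) - t * G = t * (G * (1 / Real.sqrt V - 1)) := by ring
    rw [e, abs_mul, abs_mul]
    have : |G| * |1 / Real.sqrt V - 1| ≤ G ^ 2 / r + r * (V - 1) ^ 2 := by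
      nlinarith [abs_nonneg G]
    nlinarith [abs_nonneg t]

theorem eg_levy (M : ℕ → Measure ℝ) (N : Measure ℝ) [hM : ∀ n, IsProbabilityMeasure (M n)]
    [hN : IsProbabilityMeasure N]
    (h : ∀ t, Tendsto (fun n => charFun (M n) t) atTop (𝓝 (charFun N t))) :
    _root_.TendstoInDistribution M N := by
  have := (ProbabilityMeasure.tendsto_iff_tendsto_charFun (μ := fun n => (⟨M n, hM n⟩ : ProbabilityMeasure ℝ))
    (μ₀ := ⟨N, hN⟩)).2 h
  exact ProbabilityMeasure.tendsto_iff_forall_integral_tendsto.1 this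

theorem eg_prod {n : ℕ} (μ ν : Measure (Fin n → ℝ)) [IsProbabilityMeasure μ]
    [IsProbabilityMeasure ν] (F : (Fin n → ℝ) × (Fin n → ℝ) → ℝ) (hF : Measurable F)
    (t : ℝ) (z : ℂ) (B : (Fin n → ℝ) → ℝ) (hB : Integrable B μ)
    (h : ∀ x, ‖∫ y, Complex.exp ((t * F (x, y) : ℝ) * Complex.I) ∂ν - z‖ ≤ B x) :
    ‖charFun (Measure.map F (μ.prod ν)) t - z‖ ≤ ∫ x, B x ∂μ := by
  have hm : Measurable fun p => Complex.exp ((t * F p : ℝ) * Complex.I) := by fun_prop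
  have hI : Integrable (fun p => Complex.exp ((t * F p : ℝ) * Complex.I)) (μ.prod ν) := by
    refine Integrable.of_bound hm.aestronglyMeasurable 1 (ae_of_all _ fun p => ?_)
    rw [Complex.norm_exp_ofReal_mul_I]
  have e : charFun (Measure.map F (μ.prod ν)) t =
      ∫ x, ∫ y, Complex.exp ((t * F (x, y) : ℝ) * Complex.I) ∂ν ∂μ := by
    rw [charFun_apply_real, integral_map hF.aemeasurable (by fun_prop), ← integral_prod _ hI]
    simp
  have hz : z = ∫ _x, z ∂μ := by simp
  rw [e]
  nth_rw 1 [hz]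
  rw [← integral_sub hI.integral_prod_left (integrable_const _)]
  exact norm_integral_le_of_norm_le hB (ae_of_all _ h)

section
variable {n : ℕ} {s : ℝ} {μ ν : Measure (Fin n → ℝ)}

theorem eg_cf (hs : 0 < s) (h : EgH s ν) (c : Fin n → ℝ) (hc : ∑ i, c i = 0) (a : ℝ) :
    ∫ y, Complex.exp ((a * egL c y : ℝ) * Complex.I) ∂ν =
      (Real.exp (-(a ^ 2 * (s * ∑ i, c i ^ 2) / 2)) : ℂ) := by
  have := charFun_gaussianReal (μ := 0) (v := Real.toNNReal (s * ∑ i, c i ^ 2)) a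
  rw [← h.2 c hc, charFun_apply_real, integral_map (egL_meas c).aemeasurable (by fun_prop),
    Real.coe_toNNReal _ (by positivity)] at this
  push_cast
  rw [this]
  congr 1
  push_cast
  ring

theorem eg_center (hn : 0 < n) (x : Fin n → ℝ) : ∑ i, (x i - sampleMean x) = 0 := by
  have : (n : ℝ) ≠ 0 := by positivity
  simp [Finset.sum_sub_distrib, sampleMean]
  field_simp
  simp

theorem eg_dot (hn : 0 < n) (x y : Fin n → ℝ) :
    ∑ i, (x i - sampleMean x) * (y i - sampleMean y) = egL (fun i => x i - sampleMean x) y := by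
  simp only [mul_sub, Finset.sum_sub_distrib, egL, ← Finset.sum_mul]
  rw [← Finset.sum_sub_distrib, eg_center hn, zero_mul, sub_zero]

theorem egS_nonneg (x : Fin n → ℝ) : 0 ≤ egS x := by unfold egS; positivity

theorem eg_meas1 : Measurable (fun p : (Fin n → ℝ) × (Fin n → ℝ) =>
    Real.sqrt n * sampleCov p.1 p.2) := by
  unfold sampleCov sampleMean; fun_prop

theorem eg_meas2 : Measurable (fun p : (Fin n → ℝ) × (Fin n → ℝ) =>
    Real.sqrt n * sampleCorr p.1 p.2) := by
  unfold sampleCorr sampleMean; fun_prop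

theorem eg_part1 (hn : 0 < n) (hs : 0 < s) (hμ : EgH s μ) (hν : EgH s ν) (t : ℝ) :
    ‖charFun (Measure.map (fun p : (Fin n → ℝ) × (Fin n → ℝ) =>
      Real.sqrt n * sampleCov p.1 p.2) (μ.prod ν)) t - charFun (gaussianReal 0 (Real.toNNReal (s ^ 2))) t‖
      ≤ t ^ 2 * s ^ 2 * (1 / Real.sqrt n) := by
  have := hμ.1
  have := hν.1
  have hn0 : (0 : ℝ) < n := by positivity
  have hr : 0 < Real.sqrt n := Real.sqrt_pos.2 hn0
  have hrr : Real.sqrt n ^ 2 = n := Real.sq_sqrt hn0.le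
  obtain ⟨hV, hV'⟩ := egV hn hs hμ
  set r := Real.sqrt n with hrdef
  have hB : Integrable (fun x : Fin n → ℝ => t ^ 2 * s ^ 2 / 4 * (1 / r + r * (egS x / (n * s) - 1) ^ 2)) μ :=
    ((integrable_const _).add (hV.const_mul r)).const_mul _
  refine (eg_prod μ ν _ eg_meas1 t _ _ hB ?_).trans ?_
  · intro x
    have e : ∀ y, t * (r * sampleCov x y) = (t * r / n) * egL (fun i => x i - sampleMean x) y := by
      intro y
      rw [sampleCov, eg_dot hn]; simp; ring
    simp only [← hrdef, e]
    rw [eg_cf hs hν _ (eg_center hn x), charFun_gaussianReal, Real.coe_toNNReal _ (by positivity)]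
    have e2 : Complex.exp (t * (0 : ℝ) * Complex.I - (s ^ 2 : ℝ) * t ^ 2 / 2) =
        (Real.exp (-(s ^ 2 * t ^ 2 / 2)) : ℂ) := by
      push_cast; congr 1; ring
    rw [e2, ← Complex.ofReal_sub, Complex.norm_real, Real.norm_eq_abs]
    refine (eg_rexp_lip (by positivity) (by positivity)).trans ?_
    have h2 := eg_amgm hr 1 (egS x / (n * s) - 1)
    simp only [abs_one, one_pow, one_mul] at h2
    have e3 : (t * r / n) ^ 2 * (s * ∑ i, (x i - sampleMean x) ^ 2) / 2 - s ^ 2 * t ^ 2 / 2 =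
        (t ^ 2 * s ^ 2 / 2) * (egS x / (n * s) - 1) := by
      rw [div_pow, mul_pow, hrr]
      change t ^ 2 * n / n ^ 2 * (s * egS x) / 2 - _ = _
      field_simp
    rw [e3, abs_mul, abs_of_nonneg (show 0 ≤ t ^ 2 * s ^ 2 / 2 by positivity)]
    have : 0 ≤ t ^ 2 * s ^ 2 / 4 := by positivity
    nlinarith
  · rw [integral_const_mul, integral_add (integrable_const _) (hV.const_mul r), integral_const_mul]
    simp only [integral_const, probReal_univ, one_smul]
    have h3 : r * (2 / (n : ℝ)) = 2 * (1 / r) := by rw [← hrr]; field_simp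
    have h4 : r * ∫ x, (egS x / (n * s) - 1) ^ 2 ∂μ ≤ r * (2 / (n : ℝ)) :=
      mul_le_mul_of_nonneg_left hV' hr.le
    have : 0 ≤ t ^ 2 * s ^ 2 / 4 := by positivity
    have : 0 < 1 / r := by positivity
    nlinarith

theorem eg_part2 (hn : 0 < n) (hs : 0 < s) (hμ : EgH s μ) (hν : EgH s ν) (t : ℝ) :
    ‖charFun (Measure.map (fun p : (Fin n → ℝ) × (Fin n → ℝ) =>
      Real.sqrt n * sampleCorr p.1 p.2) (μ.prod ν)) t - charFun (gaussianReal 0 1) t‖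
      ≤ 2 / n + (3 * |t| + 9 / 2) * (1 / Real.sqrt n) := by
  have := hμ.1
  have := hν.1
  have hn0 : (0 : ℝ) < n := by positivity
  have hr : 0 < Real.sqrt n := Real.sqrt_pos.2 hn0
  have hrr : Real.sqrt n ^ 2 = n := Real.sq_sqrt hn0.le
  obtain ⟨hV, hV'⟩ := egV hn hs hμ
  obtain ⟨hW, hW'⟩ := egV hn hs hν
  set r := Real.sqrt n with hrdef
  have hB : Integrable (fun x : Fin n → ℝ => (egS x / (n * s) - 1) ^ 2 +
      (3 * |t| + 9 / 2) * (1 / r)) μ := hV.add (integrable_const _)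
  refine (eg_prod μ ν _ eg_meas2 t _ _ hB ?_).trans ?_
  · intro x
    set c : Fin n → ℝ := fun i => x i - sampleMean x with hc
    have hc0 : ∑ i, c i = 0 := eg_center hn x
    have hcS : ∑ i, c i ^ 2 = egS x := rfl
    set a : ℝ := 1 / (Real.sqrt (egS x) * Real.sqrt s) with ha
    have ha2 : a ^ 2 * (s * egS x) = (s * egS x) / (s * egS x) := by
      rw [ha, div_pow, mul_pow, Real.sq_sqrt (egS_nonneg x), Real.sq_sqrt hs.le]
      ring
    have ha1 : a ^ 2 * (s * egS x) ≤ 1 := by rw [ha2]; exact div_self_le_one _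
    have e : ∀ y, t * (r * sampleCorr x y) =
        t * ((a * egL c y) * (1 / Real.sqrt (egS y / (n * s)))) := by
      intro y
      have hs' : Real.sqrt s ≠ 0 := (Real.sqrt_pos.2 hs).ne'
      rw [sampleCorr, eg_dot hn, Real.sqrt_div (egS_nonneg y), Real.sqrt_mul hn0.le, ← hrdef, ha]
      change t * (r * (egL c y / (Real.sqrt (egS x) * Real.sqrt (egS y)))) = _
      rw [one_div_div, mul_div_assoc]
      field_simp
    simp only [← hrdef, e]
    have hG := eg_cf hs hν c hc0 (t * a)
    simp only [mul_assoc t a, hcS] at hG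
    have hLm := egL_meas c
    have hSm := egS_meas (n := n)
    have I1 : Integrable (fun y => Complex.exp ((t * ((a * egL c y) *
        (1 / Real.sqrt (egS y / (n * s)))) : ℝ) * Complex.I)) ν := by
      refine Integrable.of_bound (Measurable.aestronglyMeasurable (by fun_prop)) 1
        (ae_of_all _ fun p => ?_)
      rw [Complex.norm_exp_ofReal_mul_I]
    have I2 : Integrable (fun y => Complex.exp ((t * (a * egL c y) : ℝ) * Complex.I)) ν := by
      refine Integrable.of_bound (Measurable.aestronglyMeasurable (by fun_prop)) 1
        (ae_of_all _ fun p => ?_)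
      rw [Complex.norm_exp_ofReal_mul_I]
    have K1 : Integrable (fun y => (a * egL c y) ^ 2 / r) ν := by
      simp only [mul_pow]
      exact ((eg_int hs hν c hc0 2).const_mul _).div_const _
    have K2 := hW.const_mul r
    have K12 : Integrable (fun y => (a * egL c y) ^ 2 / r + r * (egS y / (n * s) - 1) ^ 2) ν :=
      K1.add K2
    have K3 : Integrable (fun y : Fin n → ℝ => 1 / r + r * (egS y / (n * s) - 1) ^ 2) ν :=
      (integrable_const _).add K2
    have D1 : ‖∫ y, Complex.exp ((t * ((a * egL c y) *
        (1 / Real.sqrt (egS y / (n * s)))) : ℝ) * Complex.I) ∂ν -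
        ∫ y, Complex.exp ((t * (a * egL c y) : ℝ) * Complex.I) ∂ν‖ ≤
        (3 * |t| + 9 / 2) * (1 / r) := by
      rw [← integral_sub I1 I2]
      refine (norm_integral_le_of_norm_le ((K12.const_mul |t|).add (K3.const_mul (3 / 2)))
        (ae_of_all _ fun y => eg_slutsky t (a * egL c y) (egS y / (n * s)) r
          (div_nonneg (egS_nonneg y) (by positivity)) hr)).trans ?_
      have h3 : r * (2 / (n : ℝ)) = 2 * (1 / r) := by rw [← hrr]; field_simp
      have h4 : r * ∫ x, (egS x / (n * s) - 1) ^ 2 ∂ν ≤ r * (2 / (n : ℝ)) :=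
        mul_le_mul_of_nonneg_left hW' hr.le
      have h5 : ∫ y, (a * egL c y) ^ 2 / r ∂ν ≤ 1 / r := by
        rw [integral_div]
        simp only [mul_pow]
        rw [integral_const_mul, eg_L2 hs hν c hc0, hcS]
        gcongr
      rw [integral_add' (K12.const_mul |t|) (K3.const_mul (3 / 2)), integral_const_mul,
        integral_const_mul, integral_add K1 K2, integral_add (integrable_const _) K2,
        integral_const_mul]
      simp only [integral_const, probReal_univ, one_smul]
      have : |t| * (∫ y, (a * egL c y) ^ 2 / r ∂ν + r * ∫ x, (egS x / (n * s) - 1) ^ 2 ∂ν) ≤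
          |t| * (3 * (1 / r)) := mul_le_mul_of_nonneg_left (by linarith) (abs_nonneg t)
      linarith
    have D2 : ‖∫ y, Complex.exp ((t * (a * egL c y) : ℝ) * Complex.I) ∂ν -
        charFun (gaussianReal 0 1) t‖ ≤ (egS x / (n * s) - 1) ^ 2 := by
      rw [hG, charFun_gaussianReal]
      have e2 : Complex.exp (t * (0 : ℝ) * Complex.I - ((1 : NNReal) : ℝ) * t ^ 2 / 2) =
          (Real.exp (-(t ^ 2 / 2)) : ℂ) := by
        push_cast; congr 1; simp
      rw [e2, ← Complex.ofReal_sub, Complex.norm_real, Real.norm_eq_abs, mul_pow, mul_assoc, ha2]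
      rcases eq_or_ne (egS x) 0 with h0 | h0
      · rw [h0]
        have h1 : Real.exp (-(t ^ 2 / 2)) ≤ 1 := Real.exp_le_one_iff.2 (by
          have : 0 ≤ t ^ 2 := by positivity
          linarith)
        have h2 := Real.exp_pos (-(t ^ 2 / 2))
        simp only [mul_zero, zero_div, neg_zero, Real.exp_zero]
        rw [abs_of_nonneg (by linarith)]
        linarith
      · rw [div_self (mul_ne_zero hs.ne' h0), mul_one, sub_self, abs_zero]
        positivity
    calc _ ≤ _ := norm_sub_le_norm_sub_add_norm_sub _
            (∫ y, Complex.exp ((t * (a * egL c y) : ℝ) * Complex.I) ∂ν) _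
      _ ≤ _ := by linarith
  · rw [integral_add hV (integrable_const _)]
    simp only [integral_const, probReal_univ, one_smul]
    linarith

end

theorem eg_conv (M : ℕ → Measure ℝ) (N : Measure ℝ) [hM : ∀ n, IsProbabilityMeasure (M n)]
    [hN : IsProbabilityMeasure N] (A B : ℝ → ℝ)
    (h : ∀ t n, 0 < n → ‖charFun (M n) t - charFun N t‖ ≤ A t / n + B t * (1 / Real.sqrt n)) :
    _root_.TendstoInDistribution M N := by
  refine eg_levy M N fun t => ?_
  rw [tendsto_iff_norm_sub_tendsto_zero]
  have h1 : Tendsto (fun n : ℕ => A t / (n : ℝ) + B t * (1 / Real.sqrt n)) atTop (𝓝 (0 + B t * 0)) := by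
    refine (tendsto_const_div_atTop_nhds_zero_nat (A t)).add (Tendsto.const_mul _ ?_)
    have := (Real.tendsto_sqrt_atTop.comp (tendsto_natCast_atTop_atTop (R := ℝ))).inv_tendsto_atTop
    simp only [one_div]
    exact this
  rw [mul_zero, add_zero] at h1
  refine squeeze_zero' (Eventually.of_forall fun n => norm_nonneg _) ?_ h1
  filter_upwards [eventually_gt_atTop 0] with n hn using h t n hn

/-- **Corollary 2 (equicorrelation).** Let `0 < ρ < 1` and let `X, Y ~ N(0, (1-ρ)I + ρ11ᵀ)`
be independent. Then `√n Tₙ →d N(0, (1-ρ)²)` and `√n ρₙ →d N(0,1)`. -/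
theorem equicorrelation_gaussian (ρ : ℝ) (hρ₀ : 0 < ρ) (hρ₁ : ρ < 1)
    (μ ν : (n : ℕ) → Measure (Fin n → ℝ))
    (hμ : ∀ n, IsCenteredGaussian (μ n) (equicorr n ρ))
    (hν : ∀ n, IsCenteredGaussian (ν n) (equicorr n ρ)) :
    TendstoInDistribution
      (fun n => Measure.map
        (fun p : (Fin n → ℝ) × (Fin n → ℝ) => Real.sqrt n * sampleCov p.1 p.2)
        ((μ n).prod (ν n)))
      (gaussianReal 0 (Real.toNNReal ((1 - ρ) ^ 2))) ∧
    TendstoInDistribution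
      (fun n => Measure.map
        (fun p : (Fin n → ℝ) × (Fin n → ℝ) => Real.sqrt n * sampleCorr p.1 p.2)
        ((μ n).prod (ν n)))
      (gaussianReal 0 1) := by
  have hs : 0 < 1 - ρ := by linarith
  have := fun n => (hμ n).1
  have := fun n => (hν n).1
  have hm1 := fun n => Measure.isProbabilityMeasure_map (μ := (μ n).prod (ν n))
    (eg_meas1 (n := n)).aemeasurable
  have hm2 := fun n => Measure.isProbabilityMeasure_map (μ := (μ n).prod (ν n))
    (eg_meas2 (n := n)).aemeasurable
  constructor
  · refine eg_conv _ _ (fun _ => 0) (fun t => t ^ 2 * (1 - ρ) ^ 2) fun t n hn => ?_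
    rw [zero_div, zero_add]
    exact eg_part1 hn hs (egH_of (hμ n)) (egH_of (hν n)) t
  · refine eg_conv _ _ (fun _ => 2) (fun t => 3 * |t| + 9 / 2) fun t n hn => ?_
    exact eg_part2 hn hs (egH_of (hμ n)) (egH_of (hν n)) t

end
end

section
/- For each n let V_n be an n×n orthogonal matrix, let f, g: [0,1] → R_{>0} be bounded Riemann-integrable functions with ∫f > 0 and ∫g > 0, and set Σ_X = V_n diag(f(1/n), …, f(n/n)) V_nᵀ and Σ_ε = V_n diag(g(1/n), …, g(n/n)) V_nᵀ. Let X ~ N(0, Σ_X) and ε ~ N(0, Σ_ε) be independent, let β ∈ R and Y = βX + ε, and define the OLS estimator β̂ = XᵀY/‖X‖², its true conditional variance Var(β̂ | X) = XᵀΣ_εX/‖X‖⁴, and the naive variance estimator V̂_naive = εᵀ(‖X‖² I − XXᵀ)ε / (n‖X‖⁴). Then n·V̂_naive → (∫g)/(∫f) in probability, n·Var(β̂ | X) → (∫fg)/(∫f)², and hence the ratio Var(β̂ | X)/V̂_naive converges in probability to (∫ f(x)g(x) dx) / ((∫ f(x) dx)(∫ g(x) dx)); this limit is at most 1 — so naive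 i.i.d. inference for β is asymptotically valid — if and only if ∫ f(x)g(x) dx ≤ (∫ f(x) dx)(∫ g(x) dx). -/
open MeasureTheory ProbabilityTheory Filter Topology Matrix

noncomputable section

/-- The matrix `V diag(h(1/n), …, h(n/n)) Vᵀ`. -/
def specMatrix (n : ℕ) (V : Matrix (Fin n) (Fin n) ℝ) (h : ℝ → ℝ) : Matrix (Fin n) (Fin n) ℝ :=
  V * Matrix.diagonal (fun i : Fin n => h ((((i : ℕ) : ℝ) + 1) / n)) * Vᵀ

/-- Riemann sums with right end points converge for bounded a.e. continuous functions. -/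
lemma riemann_sum_tendsto (h : ℝ → ℝ) (hm : Measurable h) (C : ℝ)
    (hC : ∀ x ∈ Set.Icc (0 : ℝ) 1, |h x| ≤ C)
    (hc : ∀ᵐ x ∂(volume.restrict (Set.Icc (0 : ℝ) 1)), ContinuousAt h x) :
    Tendsto (fun n : ℕ => (∑ i : Fin n, h ((((i : ℕ) : ℝ) + 1) / n)) / n) atTop
      (𝓝 (∫ x in (0 : ℝ)..1, h x)) := by
  have key : ∀ n : ℕ, 0 < n →
      ∫ x in (0 : ℝ)..1, h ((⌈x * (n : ℝ)⌉₊ : ℝ) / n) =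
        (∑ i : Fin n, h ((((i : ℕ) : ℝ) + 1) / n)) / n := by
    intro n hn
    have hn' : (0 : ℝ) < n := by exact_mod_cast hn
    have hcong : ∀ k : ℕ, ∀ x ∈ Set.Ioc ((k : ℝ) / n) (((k + 1 : ℕ) : ℝ) / n),
        h (((k : ℝ) + 1) / n) = h ((⌈x * (n : ℝ)⌉₊ : ℝ) / n) := by
      intro k x hx
      have h1 : (k : ℝ) < x * n := (div_lt_iff₀ hn').1 hx.1
      have h2 : x * n ≤ ((k + 1 : ℕ) : ℝ) := (le_div_iff₀ hn').1 hx.2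
      have : ⌈x * (n : ℝ)⌉₊ = k + 1 := by
        rw [Nat.ceil_eq_iff (by simp)]
        exact ⟨by simpa using h1, h2⟩
      rw [this]; push_cast; rfl
    have hle : ∀ k : ℕ, (k : ℝ) / n ≤ ((k + 1 : ℕ) : ℝ) / n := by
      intro k
      gcongr
      simp
    have hint : ∀ k < n, IntervalIntegrable (fun x => h ((⌈x * (n : ℝ)⌉₊ : ℝ) / n)) volume
        ((fun k : ℕ => (k : ℝ) / n) k) ((fun k : ℕ => (k : ℝ) / n) (k + 1)) := by
      intro k _
      refine (intervalIntegrable_const (c := h (((k : ℝ) + 1) / n))).congr ?_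
      rw [Set.uIoc_of_le (hle k)]
      exact hcong k
    have hs := intervalIntegral.sum_integral_adjacent_intervals hint
    simp only [Nat.cast_zero, zero_div, div_self hn'.ne'] at hs
    rw [← hs, Finset.sum_div, Fin.sum_univ_eq_sum_range (fun i => h (((i : ℝ) + 1) / n) / n) n]
    refine Finset.sum_congr rfl fun k _ => ?_
    rw [← intervalIntegral.integral_congr_ae (f := fun _ => h (((k : ℝ) + 1) / n))]
    · rw [intervalIntegral.integral_const]
      push_cast
      rw [smul_eq_mul]; field_simp; ring
    · rw [Set.uIoc_of_le (hle k)]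
      exact ae_of_all _ (hcong k)
  have hd : Tendsto (fun n : ℕ => ∫ x in (0 : ℝ)..1, h ((⌈x * (n : ℝ)⌉₊ : ℝ) / n)) atTop
      (𝓝 (∫ x in (0 : ℝ)..1, h x)) := by
    refine intervalIntegral.tendsto_integral_filter_of_dominated_convergence (fun _ => C) ?_ ?_ ?_ ?_
    · refine Eventually.of_forall fun n => Measurable.aestronglyMeasurable ?_
      fun_prop
    · filter_upwards [eventually_gt_atTop 0] with n hn
      refine ae_of_all _ fun x hx => ?_
      rw [Set.uIoc_of_le zero_le_one] at hx
      have hn' : (0 : ℝ) < n := by exact_mod_cast hn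
      apply hC
      refine ⟨by positivity, ?_⟩
      rw [div_le_one hn']
      have : ⌈x * (n : ℝ)⌉₊ ≤ n := by
        rw [Nat.ceil_le]
        nlinarith [hx.2]
      exact_mod_cast this
    · exact intervalIntegrable_const
    · rw [ae_restrict_iff' measurableSet_Icc] at hc
      filter_upwards [hc] with x hx hx'
      rw [Set.uIoc_of_le zero_le_one] at hx'
      have := hx ⟨hx'.1.le, hx'.2⟩
      exact this.tendsto.comp
        ((tendsto_nat_ceil_mul_div_atTop hx'.1.le).comp tendsto_natCast_atTop_atTop)
  refine hd.congr' ?_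
  filter_upwards [eventually_gt_atTop 0] with n hn
  exact key n hn

/-- A weak law of large numbers for weighted sums over product spaces. -/
lemma weighted_wlln {Ω : Type*} [MeasurableSpace Ω] (ν : Measure Ω) [IsProbabilityMeasure ν]
    (ψ : Ω → ℝ) (hψ : MemLp ψ 2 ν) (w : (n : ℕ) → Fin n → ℝ) (C c : ℝ)
    (hC : ∀ n i, |w n i| ≤ C)
    (hw : Tendsto (fun n : ℕ => (∑ i, w n i) / n) atTop (𝓝 c)) (δ : ℝ) (hδ : 0 < δ) :
    Tendsto (fun n : ℕ => (Measure.pi (fun _ : Fin n => ν))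
      {q | δ ≤ |(∑ i, w n i * ψ (q i)) / n - c * ∫ x, ψ x ∂ν|}) atTop (𝓝 0) := by
  set m := ∫ x, ψ x ∂ν with hm
  have hb : Tendsto (fun n : ℕ => ENNReal.ofReal ((C ^ 2 * Var[ψ; ν] / (δ / 2) ^ 2) / n)) atTop
      (𝓝 0) := by
    have := (tendsto_const_div_atTop_nhds_zero_nat (C ^ 2 * Var[ψ; ν] / (δ / 2) ^ 2))
    simpa using ENNReal.tendsto_ofReal this
  have hw' : Tendsto (fun n : ℕ => (∑ i, w n i) / n * m) atTop (𝓝 (c * m)) := hw.mul_const m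
  have hev : ∀ᶠ n : ℕ in atTop, |(∑ i, w n i) / n * m - c * m| < δ / 2 := by
    have := (Metric.tendsto_nhds.1 hw') (δ / 2) (by positivity)
    simpa [Real.dist_eq] using this
  refine tendsto_of_tendsto_of_tendsto_of_le_of_le' tendsto_const_nhds hb
    (Eventually.of_forall fun _ => zero_le) ?_
  filter_upwards [hev, eventually_gt_atTop 0] with n hn1 hn
  have hn' : (0 : ℝ) < n := by exact_mod_cast hn
  have hX : ∀ i, MemLp (fun x => w n i * ψ x) 2 ν := fun i => hψ.const_mul _
  have hXp : ∀ i, MemLp (fun q : Fin n → Ω => w n i * ψ (q i)) 2 (Measure.pi fun _ => ν) :=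
    fun i => (hX i).comp_measurePreserving (measurePreserving_eval (fun _ => ν) i)
  have hS : MemLp (∑ i, fun q : Fin n → Ω => w n i * ψ (q i)) 2 (Measure.pi fun _ => ν) :=
    memLp_finsetSum' _ fun i _ => hXp i
  have hvar := variance_sum_pi (μ := fun _ : Fin n => ν) (X := fun i x => w n i * ψ x) hX
  have hmean : ∫ q, (∑ i, fun q : Fin n → Ω => w n i * ψ (q i)) q ∂(Measure.pi fun _ => ν) =
      (∑ i, w n i) * m := by
    simp only [Finset.sum_apply]
    rw [integral_finsetSum _ fun i _ => (hXp i).integrable one_le_two, Finset.sum_mul]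
    refine Finset.sum_congr rfl fun i _ => ?_
    rw [integral_const_mul, integral_comp_eval (μ := fun _ : Fin n => ν) (i := i) (f := ψ)
      hψ.aestronglyMeasurable]
  have hch := meas_ge_le_variance_div_sq hS (c := n * (δ / 2)) (by positivity)
  rw [hmean] at hch
  refine (measure_mono ?_).trans (hch.trans (ENNReal.ofReal_le_ofReal ?_))
  · intro q hq
    simp only [Set.mem_ofPred_eq, Finset.sum_apply] at hq ⊢
    have e : (∑ i, w n i * ψ (q i)) - (∑ i, w n i) * m =
        n * ((∑ i, w n i * ψ (q i)) / n - (∑ i, w n i) / n * m) := by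
      field_simp
    rw [e, abs_mul, abs_of_pos hn']
    gcongr
    have := abs_sub_le ((∑ i, w n i * ψ (q i)) / n) ((∑ i, w n i) / n * m) (c * m)
    linarith
  · rw [hvar]
    have h1 : ∑ i, Var[fun x => w n i * ψ x; ν] ≤ n * (C ^ 2 * Var[ψ; ν]) := by
      calc _ ≤ ∑ _i : Fin n, C ^ 2 * Var[ψ; ν] := by
            refine Finset.sum_le_sum fun i _ => ?_
            rw [variance_const_mul]
            refine mul_le_mul_of_nonneg_right ?_ (variance_nonneg _ _)
            rw [← sq_abs]
            exact pow_le_pow_left₀ (abs_nonneg _) (hC n i) 2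
        _ = _ := by simp
    calc _ ≤ n * (C ^ 2 * Var[ψ; ν]) / (n * (δ / 2)) ^ 2 := by gcongr
      _ = _ := by field_simp

/-- Moments of the standard Gaussian. -/
lemma gauss_memLp_sq : MemLp (fun x : ℝ => x ^ 2) 2 (gaussianReal 0 1) := by
  rw [memLp_two_iff_integrable_sq (by fun_prop)]
  have := (memLp_id_gaussianReal (μ := 0) (v := 1) 4).integrable_norm_pow (p := 4) (by simp)
  refine this.congr (ae_of_all _ fun x => ?_)
  simp only [id, Real.norm_eq_abs]
  rw [← pow_mul, show 2 * 2 = 4 from rfl, Even.pow_abs (by decide)]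

lemma gauss_integral_sq : ∫ x : ℝ, x ^ 2 ∂(gaussianReal 0 1) = 1 := by
  have h := variance_fun_id_gaussianReal (μ := 0) (v := 1)
  rw [variance_eq_integral (by fun_prop)] at h
  simpa [integral_id_gaussianReal] using h

/-- The law of a centered Gaussian vector as the image of a standard one. -/
lemma gaussian_law_eq {n : ℕ} (V : Matrix (Fin n) (Fin n) ℝ) (d : Fin n → ℝ) (hd : ∀ i, 0 ≤ d i)
    (μ : Measure (Fin n → ℝ)) (hμ : IsCenteredGaussian μ (V * Matrix.diagonal d * Vᵀ)) :
    μ = Measure.map (fun z : Fin n → ℝ => V *ᵥ (fun i => √(d i) * z i))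
      (Measure.pi fun _ => gaussianReal 0 1) := by
  obtain ⟨hp, hμ⟩ := hμ
  have hT : Measurable (fun z : Fin n → ℝ => V *ᵥ (fun i => √(d i) * z i)) := by
    apply Continuous.measurable
    fun_prop
  have := Measure.isProbabilityMeasure_map (μ := Measure.pi fun _ : Fin n => gaussianReal 0 1)
    hT.aemeasurable
  refine Measure.ext_of_charFunDual ?_
  funext L
  set a : Fin n → ℝ := fun i => L (Pi.single i 1) with ha
  have hL : ∀ x, L x = ∑ i, a i * x i := by
    intro x
    conv_lhs => rw [pi_eq_sum_univ' x]
    rw [map_sum]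
    refine Finset.sum_congr rfl fun i _ => ?_
    rw [map_smul, smul_eq_mul, mul_comm, ha]
  have hL' : (L : (Fin n → ℝ) → ℝ) = fun x => ∑ i, a i * x i := funext hL
  set b : Fin n → ℝ := Vᵀ *ᵥ a with hb
  have hq : a ⬝ᵥ (V * Matrix.diagonal d * Vᵀ).mulVec a = ∑ i, d i * b i ^ 2 := by
    rw [← Matrix.mulVec_mulVec, ← Matrix.mulVec_mulVec, Matrix.dotProduct_mulVec,
      ← Matrix.mulVec_transpose, ← hb]
    simp only [dotProduct, Matrix.mulVec_diagonal]
    refine Finset.sum_congr rfl fun i _ => by ring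
  have hLT : ∀ z : Fin n → ℝ, L (V *ᵥ (fun i => √(d i) * z i)) = ∑ i, (b i * √(d i)) * z i := by
    intro z
    rw [hL]
    change a ⬝ᵥ _ = _
    rw [Matrix.dotProduct_mulVec, ← Matrix.mulVec_transpose, ← hb]
    simp only [dotProduct]
    refine Finset.sum_congr rfl fun i _ => by ring
  have hq0 : 0 ≤ ∑ i, d i * b i ^ 2 :=
    Finset.sum_nonneg fun i _ => mul_nonneg (hd i) (sq_nonneg _)
  rw [charFunDual_eq_charFun_map_one, hL', hμ a, charFun_gaussianReal, hq]
  rw [charFunDual_apply, integral_map hT.aemeasurable (by fun_prop)]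
  simp only [hLT]
  have e : ∀ z : Fin n → ℝ, Complex.exp (((∑ i, (b i * √(d i)) * z i : ℝ) : ℂ) * Complex.I) =
      ∏ i, Complex.exp (((b i * √(d i) : ℝ) : ℂ) * z i * Complex.I) := by
    intro z
    rw [← Complex.exp_sum]
    congr 1
    push_cast
    rw [Finset.sum_mul]
  simp only [e]
  rw [integral_fintype_prod_eq_prod (μ := fun _ : Fin n => gaussianReal 0 1)
    (f := fun i x => Complex.exp (((b i * √(d i) : ℝ) : ℂ) * (x : ℝ) * Complex.I))]
  simp only [← charFun_apply_real, charFun_gaussianReal]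
  rw [← Complex.exp_sum]
  congr 1
  rw [Real.coe_toNNReal _ hq0]
  push_cast
  simp only [mul_zero, zero_mul, zero_sub, one_pow, mul_one, one_mul, Finset.sum_neg_distrib,
    Finset.sum_div]
  congr 1
  refine Finset.sum_congr rfl fun i _ => ?_
  have : ((√(d i) : ℝ) : ℂ) ^ 2 = d i := by
    rw [← Complex.ofReal_pow, Real.sq_sqrt (hd i)]
  rw [mul_pow, this]; ring

lemma grid_mem {n : ℕ} (i : Fin n) : (((i : ℕ) : ℝ) + 1) / n ∈ Set.Icc (0 : ℝ) 1 := by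
  have hn : 0 < n := i.pos
  have hn' : (0 : ℝ) < n := by exact_mod_cast hn
  refine ⟨by positivity, ?_⟩
  rw [div_le_one hn']
  exact_mod_cast i.isLt

/-- Weighted law of large numbers with weights sampled from a function on the grid. -/
lemma grid_wlln {Ω : Type*} [MeasurableSpace Ω] (ν : Measure Ω) [IsProbabilityMeasure ν]
    (ψ : Ω → ℝ) (hψ : MemLp ψ 2 ν) (h : ℝ → ℝ) (hm : Measurable h) (C : ℝ)
    (hC : ∀ x ∈ Set.Icc (0 : ℝ) 1, |h x| ≤ C)
    (hc : ∀ᵐ x ∂(volume.restrict (Set.Icc (0 : ℝ) 1)), ContinuousAt h x)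
    (δ : ℝ) (hδ : 0 < δ) :
    Tendsto (fun n : ℕ => (Measure.pi (fun _ : Fin n => ν))
      {q | δ ≤ |(∑ i : Fin n, h ((((i : ℕ) : ℝ) + 1) / n) * ψ (q i)) / n -
        (∫ x in (0 : ℝ)..1, h x) * ∫ x, ψ x ∂ν|}) atTop (𝓝 0) :=
  weighted_wlln ν ψ hψ (fun n i => h ((((i : ℕ) : ℝ) + 1) / n)) C _
    (fun _ i => hC _ (grid_mem i)) (riemann_sum_tendsto h hm C hC hc) δ hδ

/-- Continuous mapping theorem for convergence in probability to constants. -/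
lemma cmt_four {Ω : ℕ → Type*} [∀ n, MeasurableSpace (Ω n)] (Q : (n : ℕ) → Measure (Ω n))
    (A B D E R : (n : ℕ) → Ω n → ℝ) (a b d e : ℝ) (φ : ℝ × ℝ × ℝ × ℝ → ℝ)
    (hφ : ContinuousAt φ (a, b, d, e))
    (hA : ∀ δ : ℝ, 0 < δ → Tendsto (fun n => Q n {q | δ ≤ |A n q - a|}) atTop (𝓝 0))
    (hB : ∀ δ : ℝ, 0 < δ → Tendsto (fun n => Q n {q | δ ≤ |B n q - b|}) atTop (𝓝 0))
    (hD : ∀ δ : ℝ, 0 < δ → Tendsto (fun n => Q n {q | δ ≤ |D n q - d|}) atTop (𝓝 0))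
    (hE : ∀ δ : ℝ, 0 < δ → Tendsto (fun n => Q n {q | δ ≤ |E n q - e|}) atTop (𝓝 0))
    (hR : ∀ n, 0 < n → ∀ q, R n q = φ (A n q, B n q, D n q, E n q))
    (η : ℝ) (hη : 0 < η) :
    Tendsto (fun n => Q n {q | η ≤ |R n q - φ (a, b, d, e)|}) atTop (𝓝 0) := by
  obtain ⟨δ, hδ, H⟩ := Metric.continuousAt_iff.1 hφ η hη
  have hsum := ((hA δ hδ).add (hB δ hδ)).add ((hD δ hδ).add (hE δ hδ))
  simp only [add_zero] at hsum
  refine tendsto_of_tendsto_of_tendsto_of_le_of_le' tendsto_const_nhds hsum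
    (Eventually.of_forall fun _ => zero_le) ?_
  filter_upwards [eventually_gt_atTop 0] with n hn
  refine (measure_mono ?_).trans ((measure_union_le
    ({q | δ ≤ |A n q - a|} ∪ {q | δ ≤ |B n q - b|})
    ({q | δ ≤ |D n q - d|} ∪ {q | δ ≤ |E n q - e|})).trans
    (add_le_add (measure_union_le _ _) (measure_union_le _ _)))
  intro q hq
  by_contra hcon
  simp only [Set.mem_union, Set.mem_ofPred_eq, not_or, not_le] at hcon hq
  obtain ⟨⟨h1, h2⟩, h3, h4⟩ := hcon
  have := @H (A n q, B n q, D n q, E n q) (by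
    simp only [Prod.dist_eq, Real.dist_eq]
    exact max_lt h1 (max_lt h2 (max_lt h3 h4)))
  rw [Real.dist_eq, ← hR n hn] at this
  linarith

/-- The joint law of the pair as the image of a product of standard Gaussian pairs. -/
lemma joint_law {n : ℕ} (V : Matrix (Fin n) (Fin n) ℝ) (d e : Fin n → ℝ)
    (hd : ∀ i, 0 ≤ d i) (he : ∀ i, 0 ≤ e i) (μ ε : Measure (Fin n → ℝ))
    (hμ : IsCenteredGaussian μ (V * Matrix.diagonal d * Vᵀ))
    (hε : IsCenteredGaussian ε (V * Matrix.diagonal e * Vᵀ)) (F : (Fin n → ℝ) × (Fin n → ℝ) → ℝ)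
    (hF : Measurable F) (s : Set ℝ) (hs : MeasurableSet s) :
    (Measure.map F (μ.prod ε)) s =
      (Measure.pi fun _ : Fin n => (gaussianReal 0 1).prod (gaussianReal 0 1))
        {q | F (V *ᵥ (fun i => √(d i) * (q i).1), V *ᵥ (fun i => √(e i) * (q i).2)) ∈ s} := by
  have hT : ∀ d : Fin n → ℝ, Measurable (fun z : Fin n → ℝ => V *ᵥ (fun i => √(d i) * z i)) := by
    intro d
    apply Continuous.measurable
    fun_prop
  rw [gaussian_law_eq V d hd μ hμ, gaussian_law_eq V e he ε hε,
    Measure.map_prod_map _ _ (hT d) (hT e),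
    ← (measurePreserving_arrowProdEquivProdArrow ℝ ℝ (Fin n) (fun _ => gaussianReal 0 1)
      (fun _ => gaussianReal 0 1)).map_eq,
    Measure.map_map ((hT d).prodMap (hT e)) (MeasurableEquiv.measurable _),
    Measure.map_map hF (((hT d).prodMap (hT e)).comp (MeasurableEquiv.measurable _)),
    Measure.map_apply (hF.comp (((hT d).prodMap (hT e)).comp (MeasurableEquiv.measurable _))) hs]
  rfl

lemma orth_dot {n : ℕ} (V : Matrix (Fin n) (Fin n) ℝ) (hV : Vᵀ * V = 1) (x y : Fin n → ℝ) :
    (V *ᵥ x) ⬝ᵥ (V *ᵥ y) = x ⬝ᵥ y := by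
  rw [Matrix.dotProduct_mulVec, ← Matrix.mulVec_transpose, Matrix.mulVec_mulVec, hV,
    Matrix.one_mulVec]

lemma orth_quad {n : ℕ} (V : Matrix (Fin n) (Fin n) ℝ) (hV : Vᵀ * V = 1) (e x : Fin n → ℝ) :
    (V *ᵥ x) ⬝ᵥ ((V * Matrix.diagonal e * Vᵀ) *ᵥ (V *ᵥ x)) = ∑ i, e i * x i ^ 2 := by
  rw [Matrix.mulVec_mulVec, Matrix.mul_assoc _ Vᵀ V, hV, Matrix.mul_one, ← Matrix.mulVec_mulVec,
    orth_dot V hV]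
  simp only [dotProduct, Matrix.mulVec_diagonal]
  exact Finset.sum_congr rfl fun i _ => by ring

lemma alg_one (n a d e : ℝ) (hn : n ≠ 0) :
    ((n * a) * (n * d) - (n * e) ^ 2) / (n * a) ^ 2 = (a * d - e ^ 2) / a ^ 2 := by
  rw [← mul_div_mul_left (a * d - e ^ 2) (a ^ 2) (pow_ne_zero 2 hn)]
  congr 1 <;> ring

lemma alg_two (n a b : ℝ) (hn : n ≠ 0) : n * (n * b) / (n * a) ^ 2 = b / a ^ 2 := by
  rw [← mul_div_mul_left b (a ^ 2) (pow_ne_zero 2 hn)]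
  congr 1 <;> ring

lemma alg_three (n a b d e : ℝ) (hn : n ≠ 0) :
    n * (n * b) / ((n * a) * (n * d) - (n * e) ^ 2) = b / (a * d - e ^ 2) := by
  rw [← mul_div_mul_left b (a * d - e ^ 2) (pow_ne_zero 2 hn)]
  congr 1 <;> ring

/-- **Theorem 5 (validity of naive OLS inference).** With `Σ_X = V diag(f(i/n)) Vᵀ`,
`Σ_ε = V diag(g(i/n)) Vᵀ`, `X ~ N(0,Σ_X)`, `ε ~ N(0,Σ_ε)` independent, `Y = βX + ε`,
`β̂ = XᵀY/‖X‖²`, `Var(β̂|X) = XᵀΣ_εX/‖X‖⁴` and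
`V̂_naive = εᵀ(‖X‖²I - XXᵀ)ε/(n‖X‖⁴) = (‖X‖²‖ε‖² - (Xᵀε)²)/(n‖X‖⁴)`:
`n·V̂_naive → (∫g)/(∫f)`, `n·Var(β̂|X) → (∫fg)/(∫f)²` and
`Var(β̂|X)/V̂_naive → (∫fg)/((∫f)(∫g))` in probability, and the limiting ratio is `≤ 1`
(naive i.i.d. inference is asymptotically valid) iff `∫fg ≤ (∫f)(∫g)`. -/
theorem ols_naive_inference_validity
    (V : (n : ℕ) → Matrix (Fin n) (Fin n) ℝ) (hV : ∀ n, (V n)ᵀ * V n = 1)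
    (f g : ℝ → ℝ)
    (hf_meas : Measurable f) (hg_meas : Measurable g)
    (hf_pos : ∀ x ∈ Set.Icc (0 : ℝ) 1, 0 < f x) (hg_pos : ∀ x ∈ Set.Icc (0 : ℝ) 1, 0 < g x)
    (hf_bdd : ∃ C : ℝ, ∀ x ∈ Set.Icc (0 : ℝ) 1, f x ≤ C)
    (hg_bdd : ∃ C : ℝ, ∀ x ∈ Set.Icc (0 : ℝ) 1, g x ≤ C)
    (hf_cont : ∀ᵐ x ∂(volume.restrict (Set.Icc (0 : ℝ) 1)), ContinuousAt f x)
    (hg_cont : ∀ᵐ x ∂(volume.restrict (Set.Icc (0 : ℝ) 1)), ContinuousAt g x)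
    (hf_int : 0 < ∫ x in (0 : ℝ)..1, f x) (hg_int : 0 < ∫ x in (0 : ℝ)..1, g x)
    (μ ε : (n : ℕ) → Measure (Fin n → ℝ))
    (hμ : ∀ n, IsCenteredGaussian (μ n) (specMatrix n (V n) f))
    (hε : ∀ n, IsCenteredGaussian (ε n) (specMatrix n (V n) g)) :
    -- `n · V̂_naive = εᵀ(‖X‖²I - XXᵀ)ε / ‖X‖⁴ → (∫g)/(∫f)` in probability
    TendstoInProbability
      (fun n => Measure.map
        (fun p : (Fin n → ℝ) × (Fin n → ℝ) =>
          ((∑ i, p.1 i ^ 2) * (∑ i, p.2 i ^ 2) - (∑ i, p.1 i * p.2 i) ^ 2) /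
            (∑ i, p.1 i ^ 2) ^ 2)
        ((μ n).prod (ε n)))
      ((∫ x in (0 : ℝ)..1, g x) / (∫ x in (0 : ℝ)..1, f x)) ∧
    -- `n · Var(β̂|X) = n XᵀΣ_εX / ‖X‖⁴ → (∫fg)/(∫f)²` in probability
    TendstoInProbability
      (fun n => Measure.map
        (fun p : (Fin n → ℝ) × (Fin n → ℝ) =>
          (n : ℝ) * (p.1 ⬝ᵥ (specMatrix n (V n) g).mulVec p.1) / (∑ i, p.1 i ^ 2) ^ 2)
        ((μ n).prod (ε n)))
      ((∫ x in (0 : ℝ)..1, f x * g x) / (∫ x in (0 : ℝ)..1, f x) ^ 2) ∧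
    -- the ratio `Var(β̂|X)/V̂_naive = n XᵀΣ_εX / (‖X‖²‖ε‖² - (Xᵀε)²) → (∫fg)/((∫f)(∫g))`
    TendstoInProbability
      (fun n => Measure.map
        (fun p : (Fin n → ℝ) × (Fin n → ℝ) =>
          (n : ℝ) * (p.1 ⬝ᵥ (specMatrix n (V n) g).mulVec p.1) /
            ((∑ i, p.1 i ^ 2) * (∑ i, p.2 i ^ 2) - (∑ i, p.1 i * p.2 i) ^ 2))
        ((μ n).prod (ε n)))
      ((∫ x in (0 : ℝ)..1, f x * g x) /
        ((∫ x in (0 : ℝ)..1, f x) * (∫ x in (0 : ℝ)..1, g x))) ∧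
    -- the limiting ratio is ≤ 1 (validity of naive inference) iff `∫fg ≤ (∫f)(∫g)`
    ((∫ x in (0 : ℝ)..1, f x * g x) /
        ((∫ x in (0 : ℝ)..1, f x) * (∫ x in (0 : ℝ)..1, g x)) ≤ 1 ↔
      (∫ x in (0 : ℝ)..1, f x * g x) ≤
        (∫ x in (0 : ℝ)..1, f x) * (∫ x in (0 : ℝ)..1, g x)) := by
  obtain ⟨Cf, hCf⟩ := hf_bdd
  obtain ⟨Cg, hCg⟩ := hg_bdd
  set F := ∫ x in (0 : ℝ)..1, f x with hF
  set G := ∫ x in (0 : ℝ)..1, g x with hG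
  set H := ∫ x in (0 : ℝ)..1, f x * g x with hH
  set ν : Measure (ℝ × ℝ) := (gaussianReal 0 1).prod (gaussianReal 0 1) with hν
  -- bounds
  have bf : ∀ x ∈ Set.Icc (0 : ℝ) 1, |f x| ≤ Cf := fun x hx => by
    rw [abs_of_pos (hf_pos x hx)]; exact hCf x hx
  have bg : ∀ x ∈ Set.Icc (0 : ℝ) 1, |g x| ≤ Cg := fun x hx => by
    rw [abs_of_pos (hg_pos x hx)]; exact hCg x hx
  have bfg : ∀ x ∈ Set.Icc (0 : ℝ) 1, |f x * g x| ≤ Cf * Cg := fun x hx => by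
    rw [abs_mul]
    exact mul_le_mul (bf x hx) (bg x hx) (abs_nonneg _) ((abs_nonneg _).trans (bf x hx))
  have bs : ∀ x ∈ Set.Icc (0 : ℝ) 1, |√(f x) * √(g x)| ≤ √Cf * √Cg := fun x hx => by
    rw [abs_of_nonneg (by positivity)]
    exact mul_le_mul (Real.sqrt_le_sqrt (hCf x hx)) (Real.sqrt_le_sqrt (hCg x hx))
      (Real.sqrt_nonneg _) (Real.sqrt_nonneg _)
  -- moments
  have mx : MemLp (fun p : ℝ × ℝ => p.1 ^ 2) 2 ν := gauss_memLp_sq.comp_fst _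
  have my : MemLp (fun p : ℝ × ℝ => p.2 ^ 2) 2 ν := gauss_memLp_sq.comp_snd _
  have mxy : MemLp (fun p : ℝ × ℝ => p.1 * p.2) 2 ν := by
    rw [memLp_two_iff_integrable_sq (by fun_prop)]
    have h2 : Integrable (fun x : ℝ => x ^ 2) (gaussianReal 0 1) :=
      gauss_memLp_sq.integrable one_le_two
    simpa only [mul_pow] using h2.mul_prod h2
  have ex : ∫ p, p.1 ^ 2 ∂ν = 1 := by
    rw [hν, integral_fun_fst (fun x : ℝ => x ^ 2), gauss_integral_sq]; simp
  have ey : ∫ p, p.2 ^ 2 ∂ν = 1 := by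
    rw [hν, integral_fun_snd (fun x : ℝ => x ^ 2), gauss_integral_sq]; simp
  have exy : ∫ p, p.1 * p.2 ∂ν = 0 := by
    rw [hν, integral_prod_mul (fun x : ℝ => x) (fun x : ℝ => x), integral_id_gaussianReal]; simp
  -- the four laws of large numbers
  have hA := grid_wlln ν _ mx f hf_meas Cf bf hf_cont
  have hB := grid_wlln ν _ mx (fun x => f x * g x) (hf_meas.mul hg_meas) (Cf * Cg) bfg
    (by filter_upwards [hf_cont, hg_cont] with x h1 h2 using h1.mul h2)
  have hD := grid_wlln ν _ my g hg_meas Cg bg hg_cont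
  have hE := grid_wlln ν _ mxy (fun x => √(f x) * √(g x)) (hf_meas.sqrt.mul hg_meas.sqrt)
    (√Cf * √Cg) bs
    (by filter_upwards [hf_cont, hg_cont] with x h1 h2 using h1.sqrt.mul h2.sqrt)
  rw [ex, mul_one] at hA hB
  rw [ey, mul_one] at hD
  rw [exy, mul_zero] at hE
  rw [← hF] at hA
  rw [← hH] at hB
  rw [← hG] at hD
  have pf : ∀ n, ∀ i : Fin n, 0 ≤ f ((((i : ℕ) : ℝ) + 1) / n) :=
    fun n i => (hf_pos _ (grid_mem i)).le
  have pg : ∀ n, ∀ i : Fin n, 0 ≤ g ((((i : ℕ) : ℝ) + 1) / n) :=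
    fun n i => (hg_pos _ (grid_mem i)).le
  have sumsq : ∀ n (x : Fin n → ℝ), ∑ i, x i ^ 2 = x ⬝ᵥ x := fun n x => by
    simp only [dotProduct, sq]
  have sA : ∀ n, 0 < n → ∀ q : Fin n → ℝ × ℝ,
      ∑ i, (V n *ᵥ fun i : Fin n => √(f ((((i : ℕ) : ℝ) + 1) / n)) * (q i).1) i ^ 2 =
      n * ((∑ i : Fin n, f ((((i : ℕ) : ℝ) + 1) / n) * (q i).1 ^ 2) / n) := by
    intro n hn q
    have hn' : (n : ℝ) ≠ 0 := by exact_mod_cast hn.ne'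
    rw [mul_div_cancel₀ _ hn', sumsq, orth_dot _ (hV n), ← sumsq]
    exact Finset.sum_congr rfl fun i _ => by rw [mul_pow, Real.sq_sqrt (pf n i)]
  have sD : ∀ n, 0 < n → ∀ q : Fin n → ℝ × ℝ,
      ∑ i, (V n *ᵥ fun i : Fin n => √(g ((((i : ℕ) : ℝ) + 1) / n)) * (q i).2) i ^ 2 =
      n * ((∑ i : Fin n, g ((((i : ℕ) : ℝ) + 1) / n) * (q i).2 ^ 2) / n) := by
    intro n hn q
    have hn' : (n : ℝ) ≠ 0 := by exact_mod_cast hn.ne'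
    rw [mul_div_cancel₀ _ hn', sumsq, orth_dot _ (hV n), ← sumsq]
    exact Finset.sum_congr rfl fun i _ => by rw [mul_pow, Real.sq_sqrt (pg n i)]
  have sE : ∀ n, 0 < n → ∀ q : Fin n → ℝ × ℝ,
      ∑ i, (V n *ᵥ fun i : Fin n => √(f ((((i : ℕ) : ℝ) + 1) / n)) * (q i).1) i *
        (V n *ᵥ fun i : Fin n => √(g ((((i : ℕ) : ℝ) + 1) / n)) * (q i).2) i =
      n * ((∑ i : Fin n, √(f ((((i : ℕ) : ℝ) + 1) / n)) * √(g ((((i : ℕ) : ℝ) + 1) / n)) *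
        ((q i).1 * (q i).2)) / n) := by
    intro n hn q
    have hn' : (n : ℝ) ≠ 0 := by exact_mod_cast hn.ne'
    rw [mul_div_cancel₀ _ hn']
    refine (orth_dot _ (hV n) _ _).trans ?_
    exact Finset.sum_congr rfl fun i _ => by ring
  have sB : ∀ n, 0 < n → ∀ q : Fin n → ℝ × ℝ,
      (V n *ᵥ fun i : Fin n => √(f ((((i : ℕ) : ℝ) + 1) / n)) * (q i).1) ⬝ᵥ
        (specMatrix n (V n) g).mulVec
          (V n *ᵥ fun i : Fin n => √(f ((((i : ℕ) : ℝ) + 1) / n)) * (q i).1) =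
      n * ((∑ i : Fin n, f ((((i : ℕ) : ℝ) + 1) / n) * g ((((i : ℕ) : ℝ) + 1) / n) *
        (q i).1 ^ 2) / n) := by
    intro n hn q
    have hn' : (n : ℝ) ≠ 0 := by exact_mod_cast hn.ne'
    rw [mul_div_cancel₀ _ hn', specMatrix, orth_quad _ (hV n)]
    exact Finset.sum_congr rfl fun i _ => by rw [mul_pow, Real.sq_sqrt (pf n i)]; ring
  have hset : ∀ η c : ℝ, MeasurableSet {x : ℝ | η ≤ |x - c|} := fun η c =>
    measurableSet_le measurable_const (by fun_prop)
  have mquad : ∀ n, Measurable fun p : (Fin n → ℝ) × (Fin n → ℝ) =>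
      p.1 ⬝ᵥ (specMatrix n (V n) g).mulVec p.1 := fun n => by
    apply Continuous.measurable
    fun_prop
  refine ⟨?_, ?_, ?_, ?_⟩
  · intro η hη
    have hlim := cmt_four (fun n => Measure.pi fun _ : Fin n => ν) _ _ _ _
      (fun n q => ((∑ i, (V n *ᵥ fun i : Fin n => √(f ((((i : ℕ) : ℝ) + 1) / n)) * (q i).1) i ^ 2) *
        (∑ i, (V n *ᵥ fun i : Fin n => √(g ((((i : ℕ) : ℝ) + 1) / n)) * (q i).2) i ^ 2) -
        (∑ i, (V n *ᵥ fun i : Fin n => √(f ((((i : ℕ) : ℝ) + 1) / n)) * (q i).1) i *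
        (V n *ᵥ fun i : Fin n => √(g ((((i : ℕ) : ℝ) + 1) / n)) * (q i).2) i) ^ 2) /
        (∑ i, (V n *ᵥ fun i : Fin n => √(f ((((i : ℕ) : ℝ) + 1) / n)) * (q i).1) i ^ 2) ^ 2)
      F H G 0 (fun t => (t.1 * t.2.2.1 - t.2.2.2 ^ 2) / t.1 ^ 2)
      (by
        refine ContinuousAt.div (by fun_prop) (by fun_prop) ?_
        exact pow_ne_zero 2 hf_int.ne') hA hB hD hE
      (by
        intro n hn q
        have hn' : (n : ℝ) ≠ 0 := by exact_mod_cast hn.ne'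
        rw [sA n hn, sD n hn, sE n hn]
        exact alg_one _ _ _ _ hn') η hη
    have hval : (F * G - 0 ^ 2) / F ^ 2 = G / F := by
      have := hf_int.ne'
      field_simp
      ring
    refine hlim.congr fun n => ?_
    refine Eq.symm ((joint_law (V n) _ _ (pf n) (pg n) (μ n) (ε n) (hμ n) (hε n) _ ?_ _ (hset _ _)).trans ?_)
    · fun_prop
    · simp only [hval]
      rfl
  · intro η hη
    have hlim := cmt_four (fun n => Measure.pi fun _ : Fin n => ν) _ _ _ _
      (fun n q => (n : ℝ) * ((V n *ᵥ fun i : Fin n => √(f ((((i : ℕ) : ℝ) + 1) / n)) * (q i).1) ⬝ᵥ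
        (specMatrix n (V n) g).mulVec
          (V n *ᵥ fun i : Fin n => √(f ((((i : ℕ) : ℝ) + 1) / n)) * (q i).1)) /
        (∑ i, (V n *ᵥ fun i : Fin n => √(f ((((i : ℕ) : ℝ) + 1) / n)) * (q i).1) i ^ 2) ^ 2)
      F H G 0 (fun t => t.2.1 / t.1 ^ 2)
      (by
        refine ContinuousAt.div (by fun_prop) (by fun_prop) ?_
        exact pow_ne_zero 2 hf_int.ne') hA hB hD hE
      (by
        intro n hn q
        have hn' : (n : ℝ) ≠ 0 := by exact_mod_cast hn.ne'
        rw [sA n hn, sB n hn]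
        exact alg_two _ _ _ hn') η hη
    refine hlim.congr fun n => ?_
    refine Eq.symm ((joint_law (V n) _ _ (pf n) (pg n) (μ n) (ε n) (hμ n) (hε n) _ ?_ _ (hset _ _)).trans ?_)
    · exact Measurable.div (Measurable.const_mul (mquad n) _) (by fun_prop)
    · rfl
  · intro η hη
    have hlim := cmt_four (fun n => Measure.pi fun _ : Fin n => ν) _ _ _ _
      (fun n q => (n : ℝ) * ((V n *ᵥ fun i : Fin n => √(f ((((i : ℕ) : ℝ) + 1) / n)) * (q i).1) ⬝ᵥ
        (specMatrix n (V n) g).mulVec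
          (V n *ᵥ fun i : Fin n => √(f ((((i : ℕ) : ℝ) + 1) / n)) * (q i).1)) /
        ((∑ i, (V n *ᵥ fun i : Fin n => √(f ((((i : ℕ) : ℝ) + 1) / n)) * (q i).1) i ^ 2) *
        (∑ i, (V n *ᵥ fun i : Fin n => √(g ((((i : ℕ) : ℝ) + 1) / n)) * (q i).2) i ^ 2) -
        (∑ i, (V n *ᵥ fun i : Fin n => √(f ((((i : ℕ) : ℝ) + 1) / n)) * (q i).1) i *
        (V n *ᵥ fun i : Fin n => √(g ((((i : ℕ) : ℝ) + 1) / n)) * (q i).2) i) ^ 2))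
      F H G 0 (fun t => t.2.1 / (t.1 * t.2.2.1 - t.2.2.2 ^ 2))
      (by
        refine ContinuousAt.div (by fun_prop) (by fun_prop) ?_
        have := (mul_pos hf_int hg_int).ne'
        simpa using this) hA hB hD hE
      (by
        intro n hn q
        have hn' : (n : ℝ) ≠ 0 := by exact_mod_cast hn.ne'
        rw [sA n hn, sB n hn, sD n hn, sE n hn]
        exact alg_three _ _ _ _ _ hn') η hη
    have hval : H / (F * G - 0 ^ 2) = H / (F * G) := by simp
    refine hlim.congr fun n => ?_
    refine Eq.symm ((joint_law (V n) _ _ (pf n) (pg n) (μ n) (ε n) (hμ n) (hε n) _ ?_ _ (hset _ _)).trans ?_)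
    · exact Measurable.div (Measurable.const_mul (mquad n) _) (by fun_prop)
    · simp only [hval]
      rfl
  · exact div_le_one (mul_pos hf_int hg_int)


end
end
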